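/- arXiv:2312.11951 — 5 statements merged into one kernel-verified Lean document; each statement's English description precedes it below -/
import Mathlib

section
/- For every odd integer n > 1, the number of CNATs of size n whose associated permutation has sign +1 equals the number of CNATs of size n whose associated permutation has sign −1, and both equal T_n/2, where T_n is the total number of CNATs of size n. -/
/-!
Formalization of complete non-ambiguous trees (CNATs).

A CNAT of size `n` is modelled as a Boolean filling `D : Fin n → Fin n → Bool`
of the `n × n` grid (`D i j = true` meaning that cell in row `i`, column `j`
is dotted; rows are numbered from the top, columns from the left, `0`-based),
satisfying the root, non-ambiguity, minimality and completeness conditions.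
-/

namespace CNATf

/-- A filling of the `n × n` grid. -/
abbrev Grid (n : ℕ) := Fin n → Fin n → Bool

/-- Cell `(i, j)` is dotted. -/
def Dotted {n : ℕ} (D : Grid n) (i j : Fin n) : Prop := D i j = true

/-- There is a dotted cell above `(i, j)` in the same column. -/
def HasDotAbove {n : ℕ} (D : Grid n) (i j : Fin n) : Prop :=
  ∃ i' : Fin n, i' < i ∧ Dotted D i' j

/-- There is a dotted cell to the left of `(i, j)` in the same row. -/
def HasDotLeft {n : ℕ} (D : Grid n) (i j : Fin n) : Prop :=
  ∃ j' : Fin n, j' < j ∧ Dotted D i j'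

/-- There is a dotted cell below `(i, j)` in the same column. -/
def HasDotBelow {n : ℕ} (D : Grid n) (i j : Fin n) : Prop :=
  ∃ i' : Fin n, i < i' ∧ Dotted D i' j

/-- There is a dotted cell to the right of `(i, j)` in the same row. -/
def HasDotRight {n : ℕ} (D : Grid n) (i j : Fin n) : Prop :=
  ∃ j' : Fin n, j < j' ∧ Dotted D i j'

/-- `D` is a complete non-ambiguous tree (CNAT) on the `n × n` grid:
root, non-ambiguity, minimality (rows and columns), completeness. -/
def IsCNAT {n : ℕ} (D : Grid n) : Prop :=
  (∀ i j : Fin n, (i : ℕ) = 0 → (j : ℕ) = 0 → Dotted D i j) ∧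
  (∀ i j : Fin n, Dotted D i j → ¬((i : ℕ) = 0 ∧ (j : ℕ) = 0) →
      Xor' (HasDotAbove D i j) (HasDotLeft D i j)) ∧
  (∀ i : Fin n, ∃ j : Fin n, Dotted D i j) ∧
  (∀ j : Fin n, ∃ i : Fin n, Dotted D i j) ∧
  (∀ i j : Fin n, Dotted D i j →
      (HasDotBelow D i j ∧ HasDotRight D i j) ∨ (¬HasDotBelow D i j ∧ ¬HasDotRight D i j))

/-- A leaf: a dotted cell with no dot below it in its column and no dot
to its right in its row. -/
def IsLeaf {n : ℕ} (D : Grid n) (i j : Fin n) : Prop :=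
  Dotted D i j ∧ ¬HasDotBelow D i j ∧ ¬HasDotRight D i j

/-- An internal dot: a dotted cell with both a dot below it in its column and
a dot to its right in its row. -/
def IsInternal {n : ℕ} (D : Grid n) (i j : Fin n) : Prop :=
  Dotted D i j ∧ HasDotBelow D i j ∧ HasDotRight D i j

/-- `p` is the nearest dotted cell above `l` in the column of `l`. -/
def ParentAbove {n : ℕ} (D : Grid n) (p l : Fin n × Fin n) : Prop :=
  p.2 = l.2 ∧ p.1 < l.1 ∧ Dotted D p.1 p.2 ∧
    ∀ k : Fin n, p.1 < k → k < l.1 → ¬Dotted D k l.2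

/-- `p` is the nearest dotted cell to the left of `l` in the row of `l`,
and there is no dotted cell above `l` in its column. -/
def ParentLeft {n : ℕ} (D : Grid n) (p l : Fin n × Fin n) : Prop :=
  p.1 = l.1 ∧ p.2 < l.2 ∧ Dotted D p.1 p.2 ∧
    (∀ k : Fin n, p.2 < k → k < l.2 → ¬Dotted D l.1 k) ∧
    ¬HasDotAbove D l.1 l.2

/-- `p` is the parent of the dot `l`: the nearest dotted cell above `l` in its
column if such a cell exists, otherwise the nearest dotted cell to its left. -/
def IsParent {n : ℕ} (D : Grid n) (p l : Fin n × Fin n) : Prop :=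
  ParentAbove D p l ∨ ParentLeft D p l

/-- `c` is the left child of the internal dot `p`: the nearest dot below `p`
in the column of `p`. -/
def IsLeftChild {n : ℕ} (D : Grid n) (p c : Fin n × Fin n) : Prop :=
  c.2 = p.2 ∧ p.1 < c.1 ∧ Dotted D c.1 c.2 ∧
    ∀ k : Fin n, p.1 < k → k < c.1 → ¬Dotted D k p.2

/-- `c` is the right child of the internal dot `p`: the nearest dot to the
right of `p` in the row of `p`. -/
def IsRightChild {n : ℕ} (D : Grid n) (p c : Fin n × Fin n) : Prop :=
  c.1 = p.1 ∧ p.2 < c.2 ∧ Dotted D c.1 c.2 ∧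
    ∀ k : Fin n, p.2 < k → k < c.2 → ¬Dotted D p.1 k

/-- A left leaf: a leaf whose parent is above it in its column. -/
def IsLeftLeaf {n : ℕ} (D : Grid n) (l : Fin n × Fin n) : Prop :=
  IsLeaf D l.1 l.2 ∧ ∃ p : Fin n × Fin n, ParentAbove D p l

/-- A right leaf: a leaf whose parent is to its left in its row. -/
def IsRightLeaf {n : ℕ} (D : Grid n) (l : Fin n × Fin n) : Prop :=
  IsLeaf D l.1 l.2 ∧ ∃ p : Fin n × Fin n, ParentLeft D p l

/-- A short leaf: a leaf whose parent lies in a cell adjacent to it. -/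
def IsShortLeaf {n : ℕ} (D : Grid n) (l : Fin n × Fin n) : Prop :=
  IsLeaf D l.1 l.2 ∧ ∃ p : Fin n × Fin n, IsParent D p l ∧
    (((p.1 : ℕ) + 1 = (l.1 : ℕ) ∧ p.2 = l.2) ∨ ((p.2 : ℕ) + 1 = (l.2 : ℕ) ∧ p.1 = l.1))

/-- A long leaf: a leaf which is not short. -/
def IsLongLeaf {n : ℕ} (D : Grid n) (l : Fin n × Fin n) : Prop :=
  IsLeaf D l.1 l.2 ∧ ¬IsShortLeaf D l

/-- All leaves of `D` are short (i.e. `D ∈ 𝒜ₙ`). -/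
def AllLeavesShort {n : ℕ} (D : Grid n) : Prop :=
  ∀ l : Fin n × Fin n, IsLeaf D l.1 l.2 → IsShortLeaf D l

/-- `π` is the permutation associated with the CNAT `D`: for every row `i`,
the leaf of row `i` lies in column `π i`. -/
def IsAssocPerm {n : ℕ} (D : Grid n) (π : Equiv.Perm (Fin n)) : Prop :=
  ∀ i : Fin n, IsLeaf D i (π i)

/-- Two left leaves `l₁`, `l₂` (with respective parents `p₁`, `p₂`) are
interacting if `r(p₁) < r(l₂) < r(l₁)` or `r(p₂) < r(l₁) < r(l₂)`. -/
def InteractingLeft {n : ℕ} (D : Grid n) (l₁ l₂ : Fin n × Fin n) : Prop :=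
  IsLeftLeaf D l₁ ∧ IsLeftLeaf D l₂ ∧
    ∃ p₁ p₂ : Fin n × Fin n, ParentAbove D p₁ l₁ ∧ ParentAbove D p₂ l₂ ∧
      ((p₁.1 < l₂.1 ∧ l₂.1 < l₁.1) ∨ (p₂.1 < l₁.1 ∧ l₁.1 < l₂.1))

/-- Two right leaves `l₁`, `l₂` (with respective parents `p₁`, `p₂`) are
interacting if `c(p₁) < c(l₂) < c(l₁)` or `c(p₂) < c(l₁) < c(l₂)`. -/
def InteractingRight {n : ℕ} (D : Grid n) (l₁ l₂ : Fin n × Fin n) : Prop :=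
  IsRightLeaf D l₁ ∧ IsRightLeaf D l₂ ∧
    ∃ p₁ p₂ : Fin n × Fin n, ParentLeft D p₁ l₁ ∧ ParentLeft D p₂ l₂ ∧
      ((p₁.2 < l₂.2 ∧ l₂.2 < l₁.2) ∨ (p₂.2 < l₁.2 ∧ l₁.2 < l₂.2))

/-- Two leaves are interacting (as left leaves or as right leaves). -/
def Interacting {n : ℕ} (D : Grid n) (l₁ l₂ : Fin n × Fin n) : Prop :=
  InteractingLeft D l₁ l₂ ∨ InteractingRight D l₁ l₂

/-- The switch `S(T, l₁, l₂)` of two interacting leaves: `l₁` and `l₂` are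
erased and replaced by dots at `(r(l₂), c(l₁))` and `(r(l₁), c(l₂))`
(for left leaves this exchanges their row labels, for right leaves this
exchanges their column labels; both descriptions yield the same filling). -/
def switchLeaves {n : ℕ} (D : Grid n) (l₁ l₂ : Fin n × Fin n) : Grid n := fun i j =>
  if (i = l₂.1 ∧ j = l₁.2) ∨ (i = l₁.1 ∧ j = l₂.2) then true
  else if (i = l₁.1 ∧ j = l₁.2) ∨ (i = l₂.1 ∧ j = l₂.2) then false
  else D i j

/-!
A sign-reversing involution proves the theorem. Write `n = 2m + 1` and pair up the rows
`(1, 2), (3, 4), …, (2m - 1, 2m)`, leaving out the root row `0`, and likewise the columns. If the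
two rows of a pair have no dot in a common column, exchanging them preserves the relative position
of any two dots of a column, hence yields another CNAT, while the associated permutation is
multiplied by a transposition. Such exchanges do not affect which pairs are exchangeable, so always
exchanging the same chosen pair is an involution.

An exchangeable pair exists: every leaf is the only dot of its row or of its column, so at least
`2m + 1` lines have a single dot. A row with a single dot is not the root row, and if it is the
first row of its pair then the pair is exchangeable, since a leaf has nothing below it. Without
exchangeable pairs there are thus at most `m` such rows, and at most `m` such columns.
-/

open Equiv (Perm swap)

variable {n m : ℕ} {D : Grid n} {π ρ : Perm (Fin n)}

/-- The reflection of a filling in the main diagonal, used to deduce statements about columns from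
statements about rows. -/
def transpose (D : Grid n) : Grid n := fun i j => D j i

lemma IsCNAT.transpose (hD : IsCNAT D) : IsCNAT (transpose D) := by
  obtain ⟨root, nonambiguous, rows, columns, complete⟩ := hD
  exact ⟨fun i j hi hj => root j i hj hi,
    fun i j hij hne => (nonambiguous j i hij fun h => hne h.symm).symm, columns, rows,
    fun i j hij => (complete j i hij).imp And.symm And.symm⟩

lemma IsLeaf.transpose {i j : Fin n} (h : IsLeaf D i j) : IsLeaf (transpose D) j i :=
  ⟨h.1, h.2.2, h.2.1⟩

lemma IsAssocPerm.transpose (hπ : IsAssocPerm D π) : IsAssocPerm (transpose D) π.symm := by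
  intro i
  have h_leaf := (hπ (π.symm i)).transpose
  rwa [Equiv.apply_symm_apply] at h_leaf

/-- The set of columns in which row `i` has a dot. -/
def rowDots (D : Grid n) (i : Fin n) : Set (Fin n) := {j | Dotted D i j}

/-- The set of rows in which column `j` has a dot. -/
def colDots (D : Grid n) (j : Fin n) : Set (Fin n) := {i | Dotted D i j}

section RowPermutation

variable {σ : Perm (Fin n)} {i j : Fin n}

lemma hasDotAbove_comp_iff (hσ : StrictMonoOn σ (colDots (D ∘ σ) j))
    (hij : Dotted (D ∘ σ) i j) : HasDotAbove (D ∘ σ) i j ↔ HasDotAbove D (σ i) j :=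
  (σ.surjective.exists.trans <| exists_congr fun _ =>
    and_congr_left fun h => hσ.lt_iff_lt h hij).symm

lemma hasDotBelow_comp_iff (hσ : StrictMonoOn σ (colDots (D ∘ σ) j))
    (hij : Dotted (D ∘ σ) i j) : HasDotBelow (D ∘ σ) i j ↔ HasDotBelow D (σ i) j :=
  (σ.surjective.exists.trans <| exists_congr fun _ =>
    and_congr_left fun h => hσ.lt_iff_lt hij h).symm

lemma IsCNAT.comp_perm [NeZero n] (hD : IsCNAT D) (hσ : ∀ j, StrictMonoOn σ (colDots (D ∘ σ) j))
    (hσ₀ : σ 0 = 0) : IsCNAT (D ∘ σ) := by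
  obtain ⟨root, nonambiguous, rows, columns, complete⟩ := hD
  have val_eq_zero_iff (i : Fin n) : (σ i : ℕ) = 0 ↔ (i : ℕ) = 0 := by
    rw [Fin.val_eq_zero_iff, Fin.val_eq_zero_iff, ← σ.injective.eq_iff (a := i), hσ₀]
  refine ⟨fun i j hi => root (σ i) j ((val_eq_zero_iff i).2 hi), fun i j hij hne => ?_,
    fun i => rows (σ i), fun j => σ.surjective.exists.1 (columns j), fun i j hij => ?_⟩
  · rw [hasDotAbove_comp_iff (hσ j) hij]
    rw [← val_eq_zero_iff] at hne
    exact nonambiguous (σ i) j hij hne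
  · rw [hasDotBelow_comp_iff (hσ j) hij]
    exact complete (σ i) j hij

lemma IsAssocPerm.comp_perm (hπ : IsAssocPerm D π)
    (hσ : ∀ j, StrictMonoOn σ (colDots (D ∘ σ) j)) : IsAssocPerm (D ∘ σ) (π * σ) := by
  intro i
  obtain ⟨dotted, below, right⟩ := hπ (σ i)
  exact ⟨dotted, (hasDotBelow_comp_iff (hσ _) dotted).not.2 below, right⟩

lemma strictMonoOn_swap_of_covBy {α : Type*} [LinearOrder α] {r s : α} {S : Set α} (hrs : r ⋖ s)
    (hS : r ∈ S → s ∉ S) : StrictMonoOn (swap r s) S := by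
  intro x hx y hy hxy
  have not_between (z : α) : z ≤ r ∨ s ≤ z := (le_or_gt z r).imp_right hrs.ge_of_gt
  have := hrs.lt
  have := not_between x
  have := not_between y
  rw [Equiv.swap_apply_def, Equiv.swap_apply_def]
  split_ifs <;> grind

lemma strictMonoOn_swap_colDots {r s : Fin n} (hrs : r ⋖ s)
    (hD : Disjoint (rowDots D r) (rowDots D s)) (j : Fin n) :
    StrictMonoOn (swap r s) (colDots (D ∘ swap r s) j) := by
  refine strictMonoOn_swap_of_covBy hrs fun hr hs => ?_
  have hj_r : j ∈ rowDots D r := by simpa [colDots, rowDots, Dotted] using hs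
  have hj_s : j ∈ rowDots D s := by simpa [colDots, rowDots, Dotted] using hr
  exact Set.disjoint_left.1 hD hj_r hj_s

end RowPermutation

section AssociatedPermutation

lemma IsCNAT.exists_isLeaf (hD : IsCNAT D) (i : Fin n) : ∃ j, IsLeaf D i j := by
  obtain ⟨-, -, rows, -, complete⟩ := hD
  obtain ⟨j, hj, rightmost⟩ := wellFounded_gt.has_min (rowDots D i) (rows i)
  have right : ¬HasDotRight D i j := fun ⟨j', hlt, hj'⟩ => rightmost j' hj' hlt
  exact ⟨j, hj, ((complete i j hj).resolve_left fun h => right h.2).1, right⟩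

lemma IsLeaf.eq_of_col {i i' j : Fin n} (h : IsLeaf D i j) (h' : IsLeaf D i' j) : i = i' :=
  le_antisymm (not_lt.1 fun hlt => h'.2.1 ⟨i, hlt, h.1⟩) (not_lt.1 fun hlt => h.2.1 ⟨i', hlt, h'.1⟩)

lemma IsLeaf.eq_of_row {i j j' : Fin n} (h : IsLeaf D i j) (h' : IsLeaf D i j') : j = j' :=
  h.transpose.eq_of_col h'.transpose

lemma IsCNAT.exists_isAssocPerm (hD : IsCNAT D) : ∃ π, IsAssocPerm D π := by
  choose f hf using hD.exists_isLeaf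
  have hinj : Function.Injective f := fun a b hab => (hf a).eq_of_col (hab ▸ hf b)
  exact ⟨.ofBijective f (Finite.injective_iff_bijective.1 hinj), hf⟩

lemma IsAssocPerm.unique (hπ : IsAssocPerm D π) (hρ : IsAssocPerm D ρ) : π = ρ :=
  Equiv.ext fun i => (hπ i).eq_of_row (hρ i)

end AssociatedPermutation

section SingleDotLines

lemma IsCNAT.isInternal_root [NeZero n] (hD : IsCNAT D) (hn : 1 < n) : IsInternal D 0 0 := by
  obtain ⟨root, nonambiguous, rows, -, complete⟩ := hD
  have root_dotted : Dotted D 0 0 := root 0 0 rfl rfl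
  let S : Set (Fin n × Fin n) := {p | Dotted D p.1 p.2 ∧ p ≠ 0}
  have hS : S.Nonempty := by
    obtain ⟨j, hj⟩ := rows ⟨1, hn⟩
    exact ⟨(⟨1, hn⟩, j), hj, fun h => by simpa using congr_arg (fun p => (p.1 : ℕ)) h⟩
  -- The dot preceding a minimal non-root dot can only be the root, which is thus not a leaf.
  obtain ⟨⟨i, j⟩, ⟨hij, hne⟩, hmin⟩ := wellFounded_lt.has_min S hS
  have eq_root {p : Fin n × Fin n} (hp : Dotted D p.1 p.2) (hlt : p < (i, j)) : p = 0 :=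
    by_contra fun h => hmin p ⟨hp, h⟩ hlt
  have hne' : ¬((i : ℕ) = 0 ∧ (j : ℕ) = 0) := by
    simpa only [Fin.val_eq_zero_iff, Ne, Prod.ext_iff, Prod.fst_zero, Prod.snd_zero] using hne
  refine ⟨root_dotted, (complete 0 0 root_dotted).resolve_right fun ⟨below, right⟩ => ?_⟩
  rcases Xor.or (nonambiguous i j hij hne') with ⟨i', hlt, hi'⟩ | ⟨j', hlt, hj'⟩
  · obtain ⟨rfl, rfl⟩ := Prod.ext_iff.1 (eq_root hi' (Prod.mk_lt_mk_iff_left.2 hlt))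
    exact below ⟨i, hlt, hij⟩
  · obtain ⟨rfl, rfl⟩ := Prod.ext_iff.1 (eq_root hj' (Prod.mk_lt_mk_iff_right.2 hlt))
    exact right ⟨j, hlt, hij⟩

lemma IsInternal.not_subsingleton_rowDots {i j : Fin n} (h : IsInternal D i j) :
    ¬(rowDots D i).Subsingleton := by
  obtain ⟨dotted, -, j', hlt, hj'⟩ := h
  exact fun hi => hlt.ne (hi dotted hj')

lemma IsCNAT.disjoint_rowDots_of_subsingleton (hD : IsCNAT D) {r s : Fin n} (hrs : r < s)
    (hr : (rowDots D r).Subsingleton) : Disjoint (rowDots D r) (rowDots D s) := by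
  obtain ⟨-, -, -, -, complete⟩ := hD
  refine Set.disjoint_left.2 fun j hj hj' => ?_
  rcases complete r j hj with h | ⟨below, -⟩
  · exact IsInternal.not_subsingleton_rowDots ⟨hj, h⟩ hr
  · exact below ⟨s, hrs, hj'⟩

lemma IsLeaf.subsingleton_rowDots {i j : Fin n} (h : IsLeaf D i j) (hleft : ¬HasDotLeft D i j) :
    (rowDots D i).Subsingleton := by
  refine Set.subsingleton_of_subset_singleton (a := j) fun j' hj' => le_antisymm ?_ ?_
  · exact not_lt.1 fun hlt => h.2.2 ⟨j', hlt, hj'⟩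
  · exact not_lt.1 fun hlt => hleft ⟨j', hlt, hj'⟩

lemma IsCNAT.subsingleton_rowDots_or_colDots (hD : IsCNAT D) {i j : Fin n} (h : IsLeaf D i j) :
    (rowDots D i).Subsingleton ∨ (colDots D j).Subsingleton := by
  by_cases hroot : (i : ℕ) = 0 ∧ (j : ℕ) = 0
  · exact .inl <| h.subsingleton_rowDots fun ⟨j', hlt, _⟩ => by omega
  · rcases hD.2.1 i j h.1 hroot with ⟨-, left⟩ | ⟨-, above⟩
    · exact .inl <| h.subsingleton_rowDots left
    · exact .inr <| h.transpose.subsingleton_rowDots above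

lemma IsCNAT.le_ncard_add_ncard (hD : IsCNAT D) :
    n ≤ {i | (rowDots D i).Subsingleton}.ncard + {j | (colDots D j).Subsingleton}.ncard := by
  obtain ⟨π, hπ⟩ := hD.exists_isAssocPerm
  set R := {i | (rowDots D i).Subsingleton}
  set C := {j | (colDots D j).Subsingleton}
  have h_cover : R ∪ π ⁻¹' C = Set.univ :=
    Set.eq_univ_of_forall fun i => hD.subsingleton_rowDots_or_colDots (hπ i)
  have h_card : (π ⁻¹' C).ncard = C.ncard :=
    Set.ncard_preimage_of_injective_subset_range π.injective (by simp [π.surjective.range_eq])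
  calc n = (R ∪ π ⁻¹' C).ncard := by rw [h_cover, Set.ncard_univ, Nat.card_fin]
    _ ≤ R.ncard + (π ⁻¹' C).ncard := Set.ncard_union_le _ _
    _ = R.ncard + C.ncard := by rw [h_card]

end SingleDotLines

section Pairing

/-- The first line `2k + 1` of the `k`-th pair of rows or columns. -/
def pairFst (k : Fin m) : Fin (2 * m + 1) := ⟨2 * k + 1, by omega⟩

/-- The second line `2k + 2` of the `k`-th pair of rows or columns. -/
def pairSnd (k : Fin m) : Fin (2 * m + 1) := ⟨2 * k + 2, by omega⟩

lemma pairFst_covBy_pairSnd (k : Fin m) : pairFst k ⋖ pairSnd k := by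
  rw [Fin.covBy_iff, Nat.covBy_iff_add_one_eq]
  rfl

lemma eq_zero_or_eq_pairFst_or_eq_pairSnd (i : Fin (2 * m + 1)) :
    i = 0 ∨ (∃ k, i = pairFst k) ∨ ∃ k, i = pairSnd k := by
  obtain ⟨i, hi⟩ := i
  rcases i.even_or_odd' with ⟨_ | c, rfl | rfl⟩
  · exact .inl rfl
  · exact .inr <| .inl ⟨⟨0, by omega⟩, rfl⟩
  · exact .inr <| .inr ⟨⟨c, by omega⟩, rfl⟩
  · exact .inr <| .inl ⟨⟨c + 1, by omega⟩, rfl⟩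

/-- The transposition of the two lines of the `k`-th pair. -/
def pairSwap (k : Fin m) : Perm (Fin (2 * m + 1)) := swap (pairFst k) (pairSnd k)

lemma pairSwap_zero (k : Fin m) : pairSwap k 0 = 0 :=
  Equiv.swap_apply_of_ne_of_ne (Fin.ne_of_val_ne (Nat.succ_ne_zero _).symm)
    (Fin.ne_of_val_ne (Nat.succ_ne_zero _).symm)

lemma pairSwap_pairSwap (k : Fin m) (i : Fin (2 * m + 1)) : pairSwap k (pairSwap k i) = i :=
  Equiv.swap_apply_self _ _ _

lemma sign_pairSwap (k : Fin m) : Perm.sign (pairSwap k) = -1 :=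
  Perm.sign_swap (pairFst_covBy_pairSnd k).ne

end Pairing

section Exchange

variable {D : Grid (2 * m + 1)} {π : Perm (Fin (2 * m + 1))}

/-- The two rows of the `k`-th pair have no dot in a common column. -/
def RowPairDisjoint (D : Grid (2 * m + 1)) (k : Fin m) : Prop :=
  Disjoint (rowDots D (pairFst k)) (rowDots D (pairSnd k))

lemma rowPairDisjoint_comp_pairSwap (D : Grid (2 * m + 1)) (k l : Fin m) :
    RowPairDisjoint (D ∘ pairSwap l) k ↔ RowPairDisjoint D k := by
  have rowDots_comp (i : Fin (2 * m + 1)) :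
      rowDots (D ∘ pairSwap l) i = rowDots D (pairSwap l i) := rfl
  rw [RowPairDisjoint, rowDots_comp, rowDots_comp, pairSwap]
  obtain rfl | hkl := eq_or_ne k l
  · rw [Equiv.swap_apply_left, Equiv.swap_apply_right, disjoint_comm, RowPairDisjoint]
  · rw [Equiv.swap_apply_of_ne_of_ne, Equiv.swap_apply_of_ne_of_ne, RowPairDisjoint] <;>
      simp only [pairFst, pairSnd, ne_eq, Fin.ext_iff] at * <;> omega

lemma rowPairDisjoint_transpose_comp (D : Grid (2 * m + 1)) (σ : Perm (Fin (2 * m + 1)))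
    (k : Fin m) : RowPairDisjoint (transpose (transpose D ∘ σ)) k ↔ RowPairDisjoint D k :=
  show Disjoint (σ ⁻¹' rowDots D _) (σ ⁻¹' rowDots D _) ↔ _ from
    Set.disjoint_preimage_iff σ.surjective

lemma IsCNAT.comp_pairSwap (hD : IsCNAT D) {k : Fin m} (hk : RowPairDisjoint D k) :
    IsCNAT (D ∘ pairSwap k) :=
  hD.comp_perm (strictMonoOn_swap_colDots (pairFst_covBy_pairSnd k) hk) (pairSwap_zero k)

lemma IsAssocPerm.comp_pairSwap (hπ : IsAssocPerm D π) {k : Fin m} (hk : RowPairDisjoint D k) :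
    IsAssocPerm (D ∘ pairSwap k) (π * pairSwap k) :=
  hπ.comp_perm (strictMonoOn_swap_colDots (pairFst_covBy_pairSnd k) hk)

/-- The filling obtained by exchanging the two lines of a pair, where `inl` stands for a pair of
rows and `inr` for a pair of columns. -/
def exchange : Fin m ⊕ Fin m → Grid (2 * m + 1) → Grid (2 * m + 1)
  | .inl k, D => D ∘ pairSwap k
  | .inr k, D => transpose (transpose D ∘ pairSwap k)

/-- The two lines of a pair of rows (`inl`) or columns (`inr`) have no dots facing each other,
which is the condition under which exchanging them preserves CNATs. -/
def IsExchangeable (D : Grid (2 * m + 1)) : Fin m ⊕ Fin m → Prop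
  | .inl k => RowPairDisjoint D k
  | .inr k => RowPairDisjoint (transpose D) k

lemma exchange_exchange (x : Fin m ⊕ Fin m) (D : Grid (2 * m + 1)) :
    exchange x (exchange x D) = D := by
  cases x <;> funext i j <;> simp [exchange, transpose, pairSwap_pairSwap]

lemma isExchangeable_exchange (x : Fin m ⊕ Fin m) (D : Grid (2 * m + 1)) :
    IsExchangeable (exchange x D) = IsExchangeable D := by
  funext y
  rcases x with l | l <;> rcases y with k | k <;> apply propext
  · exact rowPairDisjoint_comp_pairSwap D k l
  · exact rowPairDisjoint_transpose_comp (transpose D) (pairSwap l) k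
  · exact rowPairDisjoint_transpose_comp D (pairSwap l) k
  · exact rowPairDisjoint_comp_pairSwap (transpose D) k l

lemma IsCNAT.exchange (hD : IsCNAT D) {x : Fin m ⊕ Fin m} (hx : IsExchangeable D x) :
    IsCNAT (exchange x D) :=
  match x, hx with
  | .inl _, hk => hD.comp_pairSwap hk
  | .inr _, hk => (hD.transpose.comp_pairSwap hk).transpose

lemma IsAssocPerm.exists_exchange (hπ : IsAssocPerm D π) {x : Fin m ⊕ Fin m}
    (hx : IsExchangeable D x) :
    ∃ ρ, IsAssocPerm (exchange x D) ρ ∧ Perm.sign ρ = -Perm.sign π := by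
  rcases x with k | k
  · exact ⟨_, hπ.comp_pairSwap hx, by simp [sign_pairSwap]⟩
  · exact ⟨_, (hπ.transpose.comp_pairSwap hx).transpose, by simp [sign_pairSwap]⟩

lemma IsCNAT.ncard_subsingleton_rowDots_le [NeZero m] (hD : IsCNAT D)
    (h : ∀ k, ¬RowPairDisjoint D k) : {i | (rowDots D i).Subsingleton}.ncard ≤ m := by
  have hm : 1 < 2 * m + 1 := by have := NeZero.pos m; omega
  have h_subset : {i | (rowDots D i).Subsingleton} ⊆ Set.range (pairSnd (m := m)) := by
    intro i hi
    obtain rfl | ⟨k, rfl⟩ | ⟨k, rfl⟩ := eq_zero_or_eq_pairFst_or_eq_pairSnd i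
    · exact absurd hi (hD.isInternal_root hm).not_subsingleton_rowDots
    · exact absurd (hD.disjoint_rowDots_of_subsingleton (pairFst_covBy_pairSnd k).lt hi) (h k)
    · exact Set.mem_range_self k
  calc {i | (rowDots D i).Subsingleton}.ncard
    _ ≤ (Set.range (pairSnd (m := m))).ncard := Set.ncard_le_ncard h_subset
    _ ≤ Nat.card (Fin m) := Finite.card_range_le _
    _ = m := Nat.card_fin m

lemma IsCNAT.exists_isExchangeable [NeZero m] (hD : IsCNAT D) : ∃ x, IsExchangeable D x := by
  by_contra! h
  have h_rows : {i | (rowDots D i).Subsingleton}.ncard ≤ m :=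
    hD.ncard_subsingleton_rowDots_le fun k => h (.inl k)
  have h_cols : {j | (colDots D j).Subsingleton}.ncard ≤ m :=
    hD.transpose.ncard_subsingleton_rowDots_le fun k => h (.inr k)
  have := hD.le_ncard_add_ncard
  omega

/-- The sign-reversing involution on CNATs: exchange a pair of lines selected among the exchangeable
ones. The selection depends on `D` only through the set of its exchangeable pairs. -/
noncomputable def signReversal [NeZero m] (D : Grid (2 * m + 1)) : Grid (2 * m + 1) :=
  exchange (Classical.epsilon (IsExchangeable D)) D

lemma signReversal_involutive [NeZero m] : Function.Involutive (signReversal (m := m)) := by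
  intro D
  simp only [signReversal, isExchangeable_exchange, exchange_exchange]

end Exchange

section Counting

/-- `D` is a CNAT whose associated permutation has sign `ε`; these are counted by `T(n; ε)`. -/
def IsSignedCNAT (ε : ℤˣ) (D : Grid n) : Prop :=
  IsCNAT D ∧ ∃ π : Perm (Fin n), IsAssocPerm D π ∧ Perm.sign π = ε

lemma IsSignedCNAT.sign_unique {ε δ : ℤˣ} (hε : IsSignedCNAT ε D) (hδ : IsSignedCNAT δ D) :
    ε = δ := by
  obtain ⟨-, π, hπ, rfl⟩ := hε
  obtain ⟨-, ρ, hρ, rfl⟩ := hδ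
  rw [hπ.unique hρ]

lemma isCNAT_iff_isSignedCNAT_or : IsCNAT D ↔ IsSignedCNAT 1 D ∨ IsSignedCNAT (-1) D := by
  refine ⟨fun hD => ?_, fun h => h.elim And.left And.left⟩
  obtain ⟨π, hπ⟩ := hD.exists_isAssocPerm
  exact (Int.units_eq_one_or (Perm.sign π)).imp (fun h => ⟨hD, π, hπ, h⟩) (fun h => ⟨hD, π, hπ, h⟩)

lemma card_isCNAT_eq_add (n : ℕ) : Nat.card {D : Grid n // IsCNAT D} =
    Nat.card {D : Grid n // IsSignedCNAT 1 D} + Nat.card {D : Grid n // IsSignedCNAT (-1) D} := by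
  have h_disjoint : Disjoint (IsSignedCNAT (n := n) 1) (IsSignedCNAT (-1)) :=
    Pi.disjoint_iff.2 fun D => Prop.disjoint_iff.2 <| not_and.2 fun h h' =>
      absurd (h.sign_unique h') (by decide)
  classical
  simp only [isCNAT_iff_isSignedCNAT_or]
  rw [Nat.card_congr (subtypeOrEquiv _ _ h_disjoint), Nat.card_sum]

lemma IsSignedCNAT.signReversal [NeZero m] {D : Grid (2 * m + 1)} {ε : ℤˣ}
    (hD : IsSignedCNAT ε D) : IsSignedCNAT (-ε) (signReversal D) := by
  obtain ⟨hD, π, hπ, rfl⟩ := hD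
  have h_exchangeable := Classical.epsilon_spec hD.exists_isExchangeable
  exact ⟨hD.exchange h_exchangeable, hπ.exists_exchange h_exchangeable⟩

lemma card_isSignedCNAT_neg [NeZero m] (ε : ℤˣ) :
    Nat.card {D : Grid (2 * m + 1) // IsSignedCNAT ε D} =
      Nat.card {D : Grid (2 * m + 1) // IsSignedCNAT (-ε) D} := by
  refine Nat.card_congr <| signReversal_involutive.toPerm.subtypeEquiv fun D =>
    ⟨IsSignedCNAT.signReversal, fun h => ?_⟩
  have h' := IsSignedCNAT.signReversal h
  rwa [neg_neg, Function.Involutive.coe_toPerm, signReversal_involutive] at h'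

end Counting

/-- For every odd `n > 1`, the number of CNATs of size `n`
whose associated permutation has sign `+1` equals the number of those whose
associated permutation has sign `-1`, and both equal `Tₙ / 2`. -/
theorem cnat_sign_equidistributed_odd (n : ℕ) (hn : 1 < n) (hodd : Odd n) :
    Nat.card {D : Grid n // IsCNAT D ∧
        ∃ π : Equiv.Perm (Fin n), IsAssocPerm D π ∧ Equiv.Perm.sign π = 1}
      = Nat.card {D : Grid n // IsCNAT D ∧
        ∃ π : Equiv.Perm (Fin n), IsAssocPerm D π ∧ Equiv.Perm.sign π = -1} ∧
    2 * Nat.card {D : Grid n // IsCNAT D ∧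
        ∃ π : Equiv.Perm (Fin n), IsAssocPerm D π ∧ Equiv.Perm.sign π = 1}
      = Nat.card {D : Grid n // IsCNAT D} ∧
    2 * Nat.card {D : Grid n // IsCNAT D ∧
        ∃ π : Equiv.Perm (Fin n), IsAssocPerm D π ∧ Equiv.Perm.sign π = -1}
      = Nat.card {D : Grid n // IsCNAT D} := by
  obtain ⟨m, rfl⟩ := hodd
  have : NeZero m := ⟨by omega⟩
  have h_eq := card_isSignedCNAT_neg (m := m) 1
  have h_add := card_isCNAT_eq_add (2 * m + 1)
  simp only [IsSignedCNAT] at h_eq h_add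
  exact ⟨h_eq, by omega, by omega⟩

end CNATf
end

section
/- For every CNAT T of size n, the determinant of the n×n integer matrix M(T), whose (i,j) entry is 1 if cell (i,j) of T is dotted and 0 otherwise, equals the sign of the associated permutation π(T). -/
/-!
Formalization of complete non-ambiguous trees (CNATs).

A CNAT of size `n` is modelled as a Boolean filling `D : Fin n → Fin n → Bool`
of the `n × n` grid (`D i j = true` meaning that cell in row `i`, column `j`
is dotted; rows are numbered from the top, columns from the left, `0`-based),
satisfying the root, non-ambiguity, minimality and completeness conditions.
-/

namespace CNATf

/-!
Move column `π k` to position `k` for every `k`. The leaves then lie on the diagonal, and since no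
dot lies below a leaf in its column, the matrix of the filling becomes upper unitriangular, of
determinant `1`. Permuting the columns has multiplied the determinant by the sign of `π`.
-/

section Matrix

variable {m R : Type*} [Fintype m] [LinearOrder m] [CommRing R]

theorem det_eq_sign_mul_prod_of_isUpperTriangular_submatrix {M : Matrix m m R} {σ : Equiv.Perm m}
    (hM : (M.submatrix id σ).IsUpperTriangular) :
    M.det = ((Equiv.Perm.sign σ : ℤ) : R) * ∏ i, M i (σ i) := by
  have sign_mul_self : ((Equiv.Perm.sign σ : ℤ) : R) * ((Equiv.Perm.sign σ : ℤ) : R) = 1 := by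
    exact_mod_cast congrArg (Int.cast : ℤ → R) (Int.units_coe_mul_self (Equiv.Perm.sign σ))
  calc
    M.det = ((Equiv.Perm.sign σ : ℤ) : R) * (M.submatrix id σ).det := by
      rw [Matrix.det_permute', ← mul_assoc, sign_mul_self, one_mul]
    _ = ((Equiv.Perm.sign σ : ℤ) : R) * ∏ i, M i (σ i) := by
      simp only [Matrix.det_of_isUpperTriangular hM, Matrix.submatrix_apply, id_eq]

end Matrix

/-- The matrix `M(T)` of a filling, the object of the determinant formula: `1` in the dotted
cells and `0` elsewhere. The entries lie in any type `R` with `0` and `1`; the paper takes `ℤ`. -/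
def dotMatrix {n : ℕ} (R : Type*) [Zero R] [One R] (D : Grid n) : Matrix (Fin n) (Fin n) R :=
  Matrix.of fun i j => if D i j then 1 else 0

section DotMatrix

variable {n : ℕ} {R : Type*} [Zero R] [One R] {D : Grid n}

theorem dotMatrix_apply_of_dotted {i j : Fin n} (h : Dotted D i j) : dotMatrix R D i j = 1 :=
  if_pos h

theorem dotMatrix_apply_of_not_dotted {i j : Fin n} (h : ¬Dotted D i j) : dotMatrix R D i j = 0 :=
  if_neg h

theorem isUpperTriangular_dotMatrix_submatrix {f : Fin n → Fin n}
    (hf : ∀ k, ¬HasDotBelow D k (f k)) :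
    ((dotMatrix R D).submatrix id f).IsUpperTriangular :=
  fun i k hki => dotMatrix_apply_of_not_dotted fun h => hf k ⟨i, hki, h⟩

end DotMatrix

theorem cnat_det_eq_sign_general {n : ℕ} (R : Type*) [CommRing R] {D : Grid n}
    {π : Equiv.Perm (Fin n)} (dotted : ∀ i, Dotted D i (π i))
    (lowest : ∀ i, ¬HasDotBelow D i (π i)) :
    (dotMatrix R D).det = ((Equiv.Perm.sign π : ℤ) : R) := by
  rw [det_eq_sign_mul_prod_of_isUpperTriangular_submatrix
      (isUpperTriangular_dotMatrix_submatrix lowest),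
    Finset.prod_eq_one fun i _ => dotMatrix_apply_of_dotted (dotted i), mul_one]

/-- For every CNAT `T` of size `n`, the determinant of the
`n × n` integer matrix `M(T)` (with entry `1` in dotted cells and `0`
elsewhere) equals the sign of the associated permutation `π(T)`. -/
theorem cnat_det_eq_sign (n : ℕ) (D : Grid n) (hD : IsCNAT D)
    (π : Equiv.Perm (Fin n)) (hπ : IsAssocPerm D π) :
    (Matrix.of fun i j : Fin n => if D i j then (1 : ℤ) else 0).det
      = Equiv.Perm.sign π :=
  cnat_det_eq_sign_general ℤ (fun i => (hπ i).1) fun i => (hπ i).2.1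

end CNATf
end

section
/- In every CNAT of size n, every row contains exactly one leaf and every column contains exactly one leaf; consequently the set of leaves is the graph of a permutation of {1,…,n}. -/
/-!
Formalization of complete non-ambiguous trees (CNATs).

A CNAT of size `n` is modelled as a Boolean filling `D : Fin n → Fin n → Bool`
of the `n × n` grid (`D i j = true` meaning that cell in row `i`, column `j`
is dotted; rows are numbered from the top, columns from the left, `0`-based),
satisfying the root, non-ambiguity, minimality and completeness conditions.
-/

namespace CNATf

/-! The last dot of a row has no dot to its right, hence by completeness none below it, so it is a
leaf; conversely a leaf is the last dot of its row. Exchanging rows and columns gives the same for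
columns, and a relation that is uniquely solvable on both sides is the graph of a bijection. -/

section Relation

variable {α β : Type*}

theorem exists_equiv_of_existsUnique {r : α → β → Prop}
    (hα : ∀ a, ∃! b, r a b) (hβ : ∀ b, ∃! a, r a b) :
    ∃ e : α ≃ β, ∀ a b, r a b ↔ e a = b := by
  choose f hf hf_unique using hα
  choose g hg hg_unique using hβ
  exact ⟨⟨f, g, fun a => (hg_unique (f a) a (hf a)).symm,
      fun b => (hf_unique (g b) b (hg b)).symm⟩,
    fun a b => ⟨fun hab => (hf_unique a b hab).symm, fun hab => hab ▸ hf a⟩⟩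

theorem existsUnique_maximal [LinearOrder β] [WellFoundedGT β] {P : β → Prop} (hP : ∃ b, P b) :
    ∃! b, Maximal P b := by
  obtain ⟨b, hb⟩ := exists_maximal_of_wellFoundedGT P hP
  refine ⟨b, hb, fun c hc => ?_⟩
  rcases le_total c b with hcb | hbc
  · exact hc.eq_of_le hb.prop hcb
  · exact hb.eq_of_ge hc.prop hbc

/-- The completeness condition for a filling `R` of a grid with ordered rows `α` and columns `β`:
a dot is the last one of its row exactly when it is the last one of its column.
Both sides include `R i j`, so cells without a dot are unconstrained. -/
def IsCompleteFilling [LE α] [LE β] (R : α → β → Prop) : Prop :=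
  ∀ i j, Maximal (R i) j ↔ Maximal (R · j) i

/-- The leaves of a filling `R` of a grid with ordered rows `α` and columns `β`: the dots that are
last both in their row and in their column. -/
def IsFillingLeaf [LE α] [LE β] (R : α → β → Prop) (i : α) (j : β) : Prop :=
  Maximal (R i) j ∧ Maximal (R · j) i

theorem IsCompleteFilling.flip [LE α] [LE β] {R : α → β → Prop} (hR : IsCompleteFilling R) :
    IsCompleteFilling (flip R) :=
  fun j i => (hR i j).symm

theorem isFillingLeaf_flip [LE α] [LE β] {R : α → β → Prop} {i : α} {j : β} :
    IsFillingLeaf (flip R) j i ↔ IsFillingLeaf R i j :=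
  and_comm

theorem IsCompleteFilling.isFillingLeaf_iff_maximal [LE α] [LE β] {R : α → β → Prop}
    (hR : IsCompleteFilling R) {i : α} {j : β} : IsFillingLeaf R i j ↔ Maximal (R i) j :=
  and_iff_left_of_imp (hR i j).mp

theorem IsCompleteFilling.existsUnique_isFillingLeaf [LE α] [LinearOrder β] [WellFoundedGT β]
    {R : α → β → Prop} (hR : IsCompleteFilling R) {i : α} (hi : ∃ j, R i j) :
    ∃! j, IsFillingLeaf R i j := by
  simpa only [hR.isFillingLeaf_iff_maximal] using existsUnique_maximal hi

theorem cnat_leaves_form_perm_general [LinearOrder α] [LinearOrder β]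
    [WellFoundedGT α] [WellFoundedGT β] {R : α → β → Prop} (hR : IsCompleteFilling R)
    (hrow : ∀ i, ∃ j, R i j) (hcol : ∀ j, ∃ i, R i j) :
    (∀ i, ∃! j, IsFillingLeaf R i j) ∧ (∀ j, ∃! i, IsFillingLeaf R i j) ∧
      ∃ e : α ≃ β, ∀ i j, IsFillingLeaf R i j ↔ e i = j := by
  have row_leaf : ∀ i, ∃! j, IsFillingLeaf R i j :=
    fun i => hR.existsUnique_isFillingLeaf (hrow i)
  have col_leaf : ∀ j, ∃! i, IsFillingLeaf R i j := fun j => by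
    simpa only [isFillingLeaf_flip] using hR.flip.existsUnique_isFillingLeaf (hcol j)
  exact ⟨row_leaf, col_leaf, exists_equiv_of_existsUnique row_leaf col_leaf⟩

end Relation

section Grid

variable {n : ℕ} {D : Grid n} {i j : Fin n}

theorem maximal_dotted_row_iff : Maximal (Dotted D i) j ↔ Dotted D i j ∧ ¬HasDotRight D i j := by
  simp only [maximal_iff_forall_gt, HasDotRight, not_exists, not_and]

theorem maximal_dotted_col_iff : Maximal (Dotted D · j) i ↔ Dotted D i j ∧ ¬HasDotBelow D i j := by
  simp only [maximal_iff_forall_gt, HasDotBelow, not_exists, not_and]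

theorem isLeaf_iff_isFillingLeaf : IsLeaf D i j ↔ IsFillingLeaf (Dotted D) i j := by
  rw [IsLeaf, IsFillingLeaf, maximal_dotted_row_iff, maximal_dotted_col_iff, ← and_and_left,
    and_comm (a := ¬HasDotRight D i j)]

theorem IsCNAT.isCompleteFilling (hD : IsCNAT D) : IsCompleteFilling (Dotted D) := by
  obtain ⟨-, -, -, -, hcomplete⟩ := hD
  intro i j
  rw [maximal_dotted_row_iff, maximal_dotted_col_iff]
  exact and_congr_right fun hij =>
    not_congr (iff_iff_and_or_not_and_not.mpr (hcomplete i j hij)).symm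

end Grid

/-- In every CNAT of size `n`, every row contains exactly one
leaf and every column contains exactly one leaf; consequently the set of
leaves is the graph of a permutation of `{1, …, n}`. -/
theorem cnat_leaves_form_perm (n : ℕ) (D : Grid n) (hD : IsCNAT D) :
    (∀ i : Fin n, ∃! j : Fin n, IsLeaf D i j) ∧
    (∀ j : Fin n, ∃! i : Fin n, IsLeaf D i j) ∧
    ∃ π : Equiv.Perm (Fin n), ∀ i j : Fin n, IsLeaf D i j ↔ π i = j := by
  simpa only [isLeaf_iff_isFillingLeaf] using
    cnat_leaves_form_perm_general hD.isCompleteFilling hD.2.2.1 hD.2.2.2.1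

end CNATf
end

section
/- For every integer p ≥ 1, the set A_{2p} of CNATs of size 2p all of whose leaves are short is in bijection with the set of CNATs of size p; in particular |A_{2p}| = T_p. -/
/-!
Formalization of complete non-ambiguous trees (CNATs).

A CNAT of size `n` is modelled as a Boolean filling `D : Fin n → Fin n → Bool`
of the `n × n` grid (`D i j = true` meaning that cell in row `i`, column `j`
is dotted; rows are numbered from the top, columns from the left, `0`-based),
satisfying the root, non-ambiguity, minimality and completeness conditions.
-/

namespace CNATf

/-!
Write "left leaf" and "right leaf" for a leaf below, respectively to the right of, its parent.
Every row and every column of a CNAT contains exactly one leaf, and by non-ambiguity a left leaf is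
alone in its row and a right leaf is alone in its column.

Replacing every leaf of a CNAT of size `p` by a cherry, that is an internal dot with two short
leaves, yields a CNAT of size `2p` with short leaves only. Conversely, suppose that all leaves are
short. Going up from the bottom row, one sees that whenever `(i, j + 1)` is a right leaf,
`(i + 1, j)` is a left leaf, so that leaves come in cherries. As the row above a left leaf ends in a
right leaf, the rows are alternately those of right leaves and of left leaves, and by transposition
so are the columns. Each cherry therefore occupies a block of rows `2a, 2a + 1` and columns
`2b, 2b + 1`, and pruning the leaves amounts to keeping the cells of even coordinates.
-/

section Basic

variable {n : ℕ} {D : Grid n} {i i' j j' : Fin n}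

theorem grid_ext {D' : Grid n} (h : ∀ i j, Dotted D i j ↔ Dotted D' i j) : D = D' :=
  funext₂ fun i j => Bool.eq_iff_iff.2 (h i j)

theorem IsCNAT.dotted_root (h : IsCNAT D) (hi : (i : ℕ) = 0) (hj : (j : ℕ) = 0) : Dotted D i j :=
  h.1 i j hi hj

theorem IsCNAT.xor_above_left (h : IsCNAT D) (hd : Dotted D i j)
    (hne : ¬((i : ℕ) = 0 ∧ (j : ℕ) = 0)) : Xor (HasDotAbove D i j) (HasDotLeft D i j) :=
  h.2.1 i j hd hne

theorem IsCNAT.exists_dotted_row (h : IsCNAT D) (i : Fin n) : ∃ j, Dotted D i j :=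
  h.2.2.1 i

theorem IsCNAT.exists_dotted_col (h : IsCNAT D) (j : Fin n) : ∃ i, Dotted D i j :=
  h.2.2.2.1 j

theorem IsCNAT.below_and_right_or_neither (h : IsCNAT D) (hd : Dotted D i j) :
    (HasDotBelow D i j ∧ HasDotRight D i j) ∨ (¬HasDotBelow D i j ∧ ¬HasDotRight D i j) :=
  h.2.2.2.2 i j hd

theorem isLeaf_flip : IsLeaf (flip D) j i ↔ IsLeaf D i j :=
  and_congr_right fun _ => and_comm

theorem IsCNAT.flip (h : IsCNAT D) : IsCNAT (flip D) :=
  ⟨fun _ _ hi hj => h.dotted_root hj hi,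
    fun _ _ hd hne => (h.xor_above_left hd (hne ∘ And.symm)).symm,
    h.exists_dotted_col, h.exists_dotted_row,
    fun _ _ hd => (h.below_and_right_or_neither hd).imp And.symm And.symm⟩

theorem IsLeaf.col_unique (hj : IsLeaf D i j) (hj' : IsLeaf D i j') : j = j' :=
  le_antisymm (not_lt.1 fun hlt => hj'.2.2 ⟨j, hlt, hj.1⟩)
    (not_lt.1 fun hlt => hj.2.2 ⟨j', hlt, hj'.1⟩)

theorem IsLeaf.row_unique (hi : IsLeaf D i j) (hi' : IsLeaf D i' j) : i = i' :=
  (isLeaf_flip.2 hi).col_unique (isLeaf_flip.2 hi')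

theorem IsCNAT.exists_isLeaf_row (h : IsCNAT D) (i : Fin n) : ∃ j, IsLeaf D i j := by
  obtain ⟨j, hj⟩ := exists_maximal_of_wellFoundedGT (Dotted D i) (h.exists_dotted_row i)
  have hright : ¬HasDotRight D i j := fun ⟨_, hlt, hd⟩ => hj.not_prop_of_gt hlt hd
  exact ⟨j, hj.prop, (h.below_and_right_or_neither hj.prop).resolve_left (hright ·.2)⟩

theorem IsCNAT.exists_isLeaf_col (h : IsCNAT D) (j : Fin n) : ∃ i, IsLeaf D i j :=
  (h.flip.exists_isLeaf_row j).imp fun _ => isLeaf_flip.1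

theorem IsCNAT.not_hasDotLeft_of_hasDotAbove (h : IsCNAT D) (hd : Dotted D i j)
    (habove : HasDotAbove D i j) : ¬HasDotLeft D i j := by
  have hi : (i : ℕ) ≠ 0 := by
    obtain ⟨i', hlt, -⟩ := habove
    omega
  rcases h.xor_above_left hd (hi ·.1) with hx | hx
  · exact hx.2
  · exact absurd habove hx.2

end Basic

section ShortLeaves

variable {n : ℕ} {D : Grid n} {i j j' k : Fin n}

/-- `(i, j)` is a short left leaf: the cell directly above it is dotted, hence its parent. -/
def IsShortLeftLeaf (D : Grid n) (i j : Fin n) : Prop :=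
  IsLeaf D i j ∧ ∃ i' : Fin n, (i' : ℕ) + 1 = i ∧ Dotted D i' j

/-- `(i, j)` is a short right leaf: the cell directly to its left is dotted, which in a CNAT makes
that cell its parent. -/
def IsShortRightLeaf (D : Grid n) (i j : Fin n) : Prop :=
  IsLeaf D i j ∧ ∃ j' : Fin n, (j' : ℕ) + 1 = j ∧ Dotted D i j'

theorem isShortLeftLeaf_flip : IsShortLeftLeaf (flip D) j i ↔ IsShortRightLeaf D i j :=
  and_congr_left' isLeaf_flip

theorem isShortRightLeaf_flip : IsShortRightLeaf (flip D) j i ↔ IsShortLeftLeaf D i j :=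
  and_congr_left' isLeaf_flip

theorem IsShortLeftLeaf.isShortLeaf (hl : IsShortLeftLeaf D i j) : IsShortLeaf D (i, j) := by
  obtain ⟨hleaf, i', hi', hd⟩ := hl
  exact ⟨hleaf, (i', j), .inl ⟨rfl, by grind, hd, by grind⟩, .inl ⟨hi', rfl⟩⟩

theorem IsCNAT.isShortLeaf_of_isShortRightLeaf (h : IsCNAT D) (hl : IsShortRightLeaf D i j) :
    IsShortLeaf D (i, j) := by
  obtain ⟨hleaf, j', hj', hd⟩ := hl
  have hlt : j' < j := by grind
  have habove : ¬HasDotAbove D i j := fun ha =>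
    h.not_hasDotLeft_of_hasDotAbove hleaf.1 ha ⟨j', hlt, hd⟩
  exact ⟨hleaf, (i, j'), .inr ⟨rfl, hlt, hd, by grind, habove⟩, .inr ⟨hj', rfl⟩⟩

theorem IsShortLeaf.left_or_right (hl : IsShortLeaf D (i, j)) :
    IsShortLeftLeaf D i j ∨ IsShortRightLeaf D i j := by
  obtain ⟨hleaf, ⟨i', j'⟩, hparent, hadj⟩ := hl
  have hd : Dotted D i' j' := hparent.elim (·.2.2.1) (·.2.2.1)
  rcases hadj with ⟨hi', rfl⟩ | ⟨hj', rfl⟩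
  · exact .inl ⟨hleaf, i', hi', hd⟩
  · exact .inr ⟨hleaf, j', hj', hd⟩

theorem AllLeavesShort.left_or_right (hs : AllLeavesShort D) (hl : IsLeaf D i j) :
    IsShortLeftLeaf D i j ∨ IsShortRightLeaf D i j :=
  (hs (i, j) hl).left_or_right

theorem IsCNAT.allLeavesShort_iff (h : IsCNAT D) :
    AllLeavesShort D ↔ ∀ i j, IsLeaf D i j → IsShortLeftLeaf D i j ∨ IsShortRightLeaf D i j :=
  ⟨fun hs _ _ => hs.left_or_right, fun hs l hl =>
    (hs l.1 l.2 hl).elim IsShortLeftLeaf.isShortLeaf h.isShortLeaf_of_isShortRightLeaf⟩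

theorem AllLeavesShort.flip (hs : AllLeavesShort D) (h : IsCNAT D) : AllLeavesShort (flip D) :=
  h.flip.allLeavesShort_iff.2 fun _ _ hl => (hs.left_or_right (isLeaf_flip.1 hl)).symm.imp
    isShortLeftLeaf_flip.2 isShortRightLeaf_flip.2

theorem IsShortLeftLeaf.eq_of_dotted (hl : IsShortLeftLeaf D i j) (h : IsCNAT D)
    (hd : Dotted D i k) : k = j := by
  obtain ⟨hleaf, i', hi', hd'⟩ := hl
  have hleft : ¬HasDotLeft D i j := h.not_hasDotLeft_of_hasDotAbove hleaf.1 ⟨i', by grind, hd'⟩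
  exact le_antisymm (not_lt.1 fun hlt => hleaf.2.2 ⟨k, hlt, hd⟩)
    (not_lt.1 fun hlt => hleft ⟨k, hlt, hd⟩)

theorem IsShortRightLeaf.eq_of_dotted (hl : IsShortRightLeaf D i j) (h : IsCNAT D)
    (hd : Dotted D k j) : k = i :=
  (isShortLeftLeaf_flip.2 hl).eq_of_dotted h.flip hd

theorem IsShortLeftLeaf.not_isShortRightLeaf (hl : IsShortLeftLeaf D i j) (h : IsCNAT D) :
    ¬IsShortRightLeaf D i j := by
  rintro ⟨-, j', hj', hd⟩
  have : j' = j := hl.eq_of_dotted h hd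
  grind

theorem AllLeavesShort.isShortRightLeaf_of_hasDotBelow (hs : AllLeavesShort D) (h : IsCNAT D)
    (hd : Dotted D i k) (hbelow : HasDotBelow D i k) (hl : IsLeaf D i j) :
    IsShortRightLeaf D i j := by
  refine (hs.left_or_right hl).resolve_left fun hleft => ?_
  obtain rfl : k = j := hleft.eq_of_dotted h hd
  exact hl.2.1 hbelow

theorem AllLeavesShort.isShortLeftLeaf_of_hasDotRight (hs : AllLeavesShort D) (h : IsCNAT D)
    (hd : Dotted D k j) (hright : HasDotRight D k j) (hl : IsLeaf D i j) :
    IsShortLeftLeaf D i j :=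
  isShortRightLeaf_flip.1 <|
    (hs.flip h).isShortRightLeaf_of_hasDotBelow h.flip hd hright (isLeaf_flip.2 hl)

/-- If the leaf of column `j` were not in row `i + 1`, then by downward induction on `i` the row
just above it would end in a second leaf of column `j'`. -/
theorem AllLeavesShort.exists_isLeaf_below_left (hs : AllLeavesShort D) (h : IsCNAT D)
    (hl : IsLeaf D i j') (hj : (j : ℕ) + 1 = j') (hd : Dotted D i j) :
    ∃ k : Fin n, (i : ℕ) + 1 = k ∧ IsLeaf D k j := by
  induction i using WellFoundedGT.induction generalizing j j' with
  | ind i ih =>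
    obtain ⟨k, hk⟩ := h.exists_isLeaf_col j
    have hright : HasDotRight D i j := ⟨j', by grind, hl.1⟩
    obtain ⟨-, k', hk', hd'⟩ := hs.isShortLeftLeaf_of_hasDotRight h hd hright hk
    have hne : i ≠ k := by
      rintro rfl
      exact hk.2.2 hright
    have hik : i ≤ k := not_lt.1 fun hlt => hk.2.1 ⟨i, hlt, hd⟩
    rcases (show i ≤ k' by grind).eq_or_lt with rfl | hik'
    · exact ⟨k, hk', hk⟩
    obtain ⟨m', hm'⟩ := h.exists_isLeaf_row k'
    obtain ⟨-, m, hm, hdm⟩ :=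
      hs.isShortRightLeaf_of_hasDotBelow h hd' ⟨k, by grind, hk.1⟩ hm'
    obtain ⟨k₂, hk₂, hleaf⟩ := ih k' hik' hm' hm hdm
    obtain rfl : k = k₂ := Fin.ext (by omega)
    obtain rfl : j = m := hk.col_unique hleaf
    obtain rfl : j' = m' := Fin.ext (by omega)
    exact absurd (hl.row_unique hm') hik'.ne

theorem AllLeavesShort.isShortRightLeaf_iff_even (hs : AllLeavesShort D) (h : IsCNAT D)
    (hl : IsLeaf D i j) : IsShortRightLeaf D i j ↔ Even (i : ℕ) := by
  obtain ⟨m, hm⟩ := i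
  induction m generalizing j with
  | zero =>
    refine iff_of_true ((hs.left_or_right hl).resolve_left ?_) Even.zero
    rintro ⟨-, i', hi', -⟩
    simp at hi'
  | succ m ih =>
    obtain ⟨j₀, hj₀⟩ := h.exists_isLeaf_row ⟨m, by omega⟩
    rw [Nat.even_add_one, ← ih _ hj₀]
    constructor
    · rintro hright ⟨-, j₁, hj₁, hd₁⟩
      obtain ⟨k, hk, hleaf⟩ := hs.exists_isLeaf_below_left h hj₀ hj₁ hd₁
      obtain rfl : k = ⟨m + 1, hm⟩ := Fin.ext hk.symm
      obtain rfl : j = j₁ := hl.col_unique hleaf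
      exact IsShortLeftLeaf.not_isShortRightLeaf ⟨hl, _, rfl, hd₁⟩ h hright
    · refine fun hright => (hs.left_or_right hl).resolve_left ?_
      rintro ⟨-, i', hi', hd⟩
      have hi'm : i' = ⟨m, by omega⟩ := Fin.ext (by simpa using hi')
      rw [hi'm] at hd
      exact hright <| hs.isShortRightLeaf_of_hasDotBelow h hd ⟨_, Nat.lt_succ_self m, hl.1⟩ hj₀

theorem AllLeavesShort.isShortLeftLeaf_iff_even (hs : AllLeavesShort D) (h : IsCNAT D)
    (hl : IsLeaf D i j) : IsShortLeftLeaf D i j ↔ Even (j : ℕ) :=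
  isShortRightLeaf_flip.symm.trans <|
    (hs.flip h).isShortRightLeaf_iff_even h.flip (isLeaf_flip.2 hl)

theorem AllLeavesShort.even_row_iff_odd_col (hs : AllLeavesShort D) (h : IsCNAT D)
    (hl : IsLeaf D i j) : Even (i : ℕ) ↔ Odd (j : ℕ) := by
  rw [← Nat.not_even_iff_odd, ← hs.isShortRightLeaf_iff_even h hl,
    ← hs.isShortLeftLeaf_iff_even h hl]
  exact ⟨fun hr hleft => hleft.not_isShortRightLeaf h hr, (hs.left_or_right hl).resolve_left⟩

theorem AllLeavesShort.isLeaf_of_odd_col (hs : AllLeavesShort D) (h : IsCNAT D)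
    (hd : Dotted D i j) (hj : Odd (j : ℕ)) : IsLeaf D i j := by
  obtain ⟨k, hk⟩ := h.exists_isLeaf_col j
  have hright : IsShortRightLeaf D k j :=
    (hs.isShortRightLeaf_iff_even h hk).2 ((hs.even_row_iff_odd_col h hk).2 hj)
  rwa [hright.eq_of_dotted h hd]

theorem AllLeavesShort.isLeaf_of_odd_row (hs : AllLeavesShort D) (h : IsCNAT D)
    (hd : Dotted D i j) (hi : Odd (i : ℕ)) : IsLeaf D i j :=
  isLeaf_flip.1 <| (hs.flip h).isLeaf_of_odd_col h.flip hd hi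

end ShortLeaves

section Doubling

variable {p : ℕ} {a b : Fin p}

/-- The even index `2a`, the first of the two indices that replace `a` when a grid is doubled. -/
def evenIdx (a : Fin p) : Fin (2 * p) := ⟨2 * a, by omega⟩

/-- The odd index `2a + 1`, the second of the two indices that replace `a` when a grid is
doubled. -/
def oddIdx (a : Fin p) : Fin (2 * p) := ⟨2 * a + 1, by omega⟩

@[simp] theorem val_evenIdx (a : Fin p) : (evenIdx a : ℕ) = 2 * a := rfl

@[simp] theorem val_oddIdx (a : Fin p) : (oddIdx a : ℕ) = 2 * a + 1 := rfl

@[elab_as_elim]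
theorem even_odd_cases {motive : Fin (2 * p) → Prop} (even : ∀ a, motive (evenIdx a))
    (odd : ∀ a, motive (oddIdx a)) (i : Fin (2 * p)) : motive i := by
  obtain ⟨m, hm⟩ := i
  obtain ⟨k, rfl | rfl⟩ := Nat.even_or_odd' m
  · exact even ⟨k, by omega⟩
  · exact odd ⟨k, by omega⟩

theorem exists_iff_evenIdx_or_oddIdx {P : Fin (2 * p) → Prop} :
    (∃ i, P i) ↔ (∃ a, P (evenIdx a)) ∨ ∃ a, P (oddIdx a) := by
  refine ⟨fun ⟨i, hi⟩ => ?_, fun hP => hP.elim (fun ⟨_, ha⟩ => ⟨_, ha⟩) fun ⟨_, ha⟩ => ⟨_, ha⟩⟩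
  cases i using even_odd_cases with
  | even a => exact .inl ⟨a, hi⟩
  | odd a => exact .inr ⟨a, hi⟩

@[simp] theorem evenIdx_inj : evenIdx a = evenIdx b ↔ a = b := by simp [Fin.ext_iff]

@[simp] theorem oddIdx_inj : oddIdx a = oddIdx b ↔ a = b := by simp [Fin.ext_iff]

@[simp] theorem evenIdx_ne_oddIdx : evenIdx a ≠ oddIdx b := by
  simp only [ne_eq, Fin.ext_iff, val_evenIdx, val_oddIdx]; omega

@[simp] theorem oddIdx_ne_evenIdx : oddIdx a ≠ evenIdx b := evenIdx_ne_oddIdx.symm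

@[simp] theorem evenIdx_lt_evenIdx : evenIdx a < evenIdx b ↔ a < b := by
  simp only [Fin.lt_def, val_evenIdx]; omega

@[simp] theorem oddIdx_lt_oddIdx : oddIdx a < oddIdx b ↔ a < b := by
  simp only [Fin.lt_def, val_oddIdx]; omega

@[simp] theorem evenIdx_lt_oddIdx : evenIdx a < oddIdx b ↔ a ≤ b := by
  simp only [Fin.lt_def, Fin.le_def, val_evenIdx, val_oddIdx]; omega

@[simp] theorem oddIdx_lt_evenIdx : oddIdx a < evenIdx b ↔ a < b := by
  simp only [Fin.lt_def, val_evenIdx, val_oddIdx]; omega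

end Doubling

section Expansion

variable {p : ℕ} {E : Grid p} {a b : Fin p}

open Classical in
/-- The grid obtained from `E` by doubling all coordinates and turning every leaf into a cherry. -/
noncomputable def expandLeaves (E : Grid p) : Grid (2 * p) := fun i j =>
  decide (∃ a b, (i = evenIdx a ∧ j = evenIdx b ∧ Dotted E a b) ∨
    (i = evenIdx a ∧ j = oddIdx b ∧ IsLeaf E a b) ∨ (i = oddIdx a ∧ j = evenIdx b ∧ IsLeaf E a b))

theorem dotted_expandLeaves {i j : Fin (2 * p)} : Dotted (expandLeaves E) i j ↔
    ∃ a b, (i = evenIdx a ∧ j = evenIdx b ∧ Dotted E a b) ∨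
      (i = evenIdx a ∧ j = oddIdx b ∧ IsLeaf E a b) ∨
      (i = oddIdx a ∧ j = evenIdx b ∧ IsLeaf E a b) := by
  classical exact decide_eq_true_iff

@[simp] theorem dotted_expandLeaves_even_even :
    Dotted (expandLeaves E) (evenIdx a) (evenIdx b) ↔ Dotted E a b := by
  simp [dotted_expandLeaves]

@[simp] theorem dotted_expandLeaves_even_odd :
    Dotted (expandLeaves E) (evenIdx a) (oddIdx b) ↔ IsLeaf E a b := by
  simp [dotted_expandLeaves]

@[simp] theorem dotted_expandLeaves_odd_even :
    Dotted (expandLeaves E) (oddIdx a) (evenIdx b) ↔ IsLeaf E a b := by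
  simp [dotted_expandLeaves]

@[simp] theorem not_dotted_expandLeaves_odd_odd :
    ¬Dotted (expandLeaves E) (oddIdx a) (oddIdx b) := by
  simp [dotted_expandLeaves]

theorem flip_expandLeaves : flip (expandLeaves E) = expandLeaves (flip E) := by
  refine grid_ext fun i j => ?_
  change Dotted (expandLeaves E) j i ↔ _
  cases i using even_odd_cases <;> cases j using even_odd_cases <;> simp [isLeaf_flip]
  rfl

theorem hasDotAbove_expandLeaves (hd : Dotted E a b) :
    HasDotAbove (expandLeaves E) (evenIdx a) (evenIdx b) ↔ HasDotAbove E a b := by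
  simp only [HasDotAbove, exists_iff_evenIdx_or_oddIdx, evenIdx_lt_evenIdx, oddIdx_lt_evenIdx,
    dotted_expandLeaves_even_even, dotted_expandLeaves_odd_even, or_iff_left_iff_imp]
  exact fun ⟨c, hc, hl⟩ => absurd ⟨a, hc, hd⟩ hl.2.1

theorem hasDotLeft_expandLeaves (hd : Dotted E a b) :
    HasDotLeft (expandLeaves E) (evenIdx a) (evenIdx b) ↔ HasDotLeft E a b := by
  have := hasDotAbove_expandLeaves (E := flip E) (a := b) (b := a) hd
  rwa [← flip_expandLeaves] at this

theorem hasDotBelow_expandLeaves :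
    HasDotBelow (expandLeaves E) (evenIdx a) (evenIdx b) ↔ HasDotBelow E a b ∨ IsLeaf E a b := by
  simp only [HasDotBelow, exists_iff_evenIdx_or_oddIdx, evenIdx_lt_evenIdx, evenIdx_lt_oddIdx,
    dotted_expandLeaves_even_even, dotted_expandLeaves_odd_even]
  refine ⟨?_, Or.imp_right fun hl => ⟨a, le_rfl, hl⟩⟩
  rintro (hbelow | ⟨c, hac, hl⟩)
  · exact .inl hbelow
  · rcases hac.eq_or_lt with rfl | hlt
    · exact .inr hl
    · exact .inl ⟨c, hlt, hl.1⟩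

theorem hasDotRight_expandLeaves :
    HasDotRight (expandLeaves E) (evenIdx a) (evenIdx b) ↔ HasDotRight E a b ∨ IsLeaf E a b := by
  have := hasDotBelow_expandLeaves (E := flip E) (a := b) (b := a)
  rwa [← flip_expandLeaves, isLeaf_flip] at this

theorem IsCNAT.isInternal_expandLeaves (h : IsCNAT E) (hd : Dotted E a b) :
    IsInternal (expandLeaves E) (evenIdx a) (evenIdx b) := by
  rw [IsInternal, dotted_expandLeaves_even_even, hasDotBelow_expandLeaves,
    hasDotRight_expandLeaves]
  refine ⟨hd, (h.below_and_right_or_neither hd).elim (And.imp .inl .inl) fun hneither => ?_⟩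
  have hl : IsLeaf E a b := ⟨hd, hneither⟩
  exact ⟨.inr hl, .inr hl⟩

theorem IsLeaf.eq_of_dotted_expandLeaves (hl : IsLeaf E a b) {j : Fin (2 * p)}
    (hd : Dotted (expandLeaves E) (oddIdx a) j) : j = evenIdx b := by
  cases j using even_odd_cases with
  | even c => rw [hl.col_unique (dotted_expandLeaves_odd_even.1 hd)]
  | odd c => exact absurd hd not_dotted_expandLeaves_odd_odd

theorem IsLeaf.isShortLeftLeaf_expandLeaves (hl : IsLeaf E a b) :
    IsShortLeftLeaf (expandLeaves E) (oddIdx a) (evenIdx b) := by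
  refine ⟨⟨dotted_expandLeaves_odd_even.2 hl, ?_, ?_⟩,
    evenIdx a, rfl, dotted_expandLeaves_even_even.2 hl.1⟩
  · rintro ⟨k, hlt, hd⟩
    cases k using even_odd_cases with
    | even c => exact hl.2.1 ⟨c, oddIdx_lt_evenIdx.1 hlt, dotted_expandLeaves_even_even.1 hd⟩
    | odd c => exact hl.2.1 ⟨c, oddIdx_lt_oddIdx.1 hlt, (dotted_expandLeaves_odd_even.1 hd).1⟩
  · rintro ⟨k, hlt, hd⟩
    exact hlt.ne' (hl.eq_of_dotted_expandLeaves hd)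

theorem IsLeaf.xor_expandLeaves_odd_even (hl : IsLeaf E a b) :
    Xor (HasDotAbove (expandLeaves E) (oddIdx a) (evenIdx b))
      (HasDotLeft (expandLeaves E) (oddIdx a) (evenIdx b)) :=
  .inl ⟨⟨evenIdx a, by simp, dotted_expandLeaves_even_even.2 hl.1⟩,
    fun ⟨_, hlt, hd⟩ => hlt.ne (hl.eq_of_dotted_expandLeaves hd)⟩

theorem IsLeaf.isShortRightLeaf_expandLeaves (hl : IsLeaf E a b) :
    IsShortRightLeaf (expandLeaves E) (evenIdx a) (oddIdx b) := by
  rw [← isShortLeftLeaf_flip, flip_expandLeaves]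
  exact (isLeaf_flip.2 hl).isShortLeftLeaf_expandLeaves

theorem IsLeaf.xor_expandLeaves_even_odd (hl : IsLeaf E a b) :
    Xor (HasDotAbove (expandLeaves E) (evenIdx a) (oddIdx b))
      (HasDotLeft (expandLeaves E) (evenIdx a) (oddIdx b)) := by
  have := (isLeaf_flip.2 hl).xor_expandLeaves_odd_even
  rw [← flip_expandLeaves] at this
  exact this.symm

theorem IsCNAT.exists_dotted_expandLeaves_row (h : IsCNAT E) (i : Fin (2 * p)) :
    ∃ j, Dotted (expandLeaves E) i j := by
  cases i using even_odd_cases with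
  | even a => exact (h.exists_dotted_row a).imp' evenIdx fun _ => dotted_expandLeaves_even_even.2
  | odd a => exact (h.exists_isLeaf_row a).imp' evenIdx fun _ => dotted_expandLeaves_odd_even.2

theorem IsCNAT.isCNAT_expandLeaves (h : IsCNAT E) : IsCNAT (expandLeaves E) := by
  refine ⟨fun i j hi hj => ?_, fun i j hd hne => ?_, h.exists_dotted_expandLeaves_row,
    fun j => ?_, fun i j hd => ?_⟩
  · cases i using even_odd_cases <;> cases j using even_odd_cases <;>
      simp_all [h.dotted_root]
  · cases i using even_odd_cases <;> cases j using even_odd_cases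
    case even.even a b =>
      rw [dotted_expandLeaves_even_even] at hd
      rw [hasDotAbove_expandLeaves hd, hasDotLeft_expandLeaves hd]
      exact h.xor_above_left hd (by simpa using hne)
    case even.odd => exact (dotted_expandLeaves_even_odd.1 hd).xor_expandLeaves_even_odd
    case odd.even => exact (dotted_expandLeaves_odd_even.1 hd).xor_expandLeaves_odd_even
    case odd.odd => exact absurd hd not_dotted_expandLeaves_odd_odd
  · have := h.flip.exists_dotted_expandLeaves_row j
    rwa [← flip_expandLeaves] at this
  · cases i using even_odd_cases <;> cases j using even_odd_cases
    case even.even =>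
      exact .inl (h.isInternal_expandLeaves (dotted_expandLeaves_even_even.1 hd)).2
    case even.odd =>
      exact .inr (dotted_expandLeaves_even_odd.1 hd).isShortRightLeaf_expandLeaves.1.2
    case odd.even =>
      exact .inr (dotted_expandLeaves_odd_even.1 hd).isShortLeftLeaf_expandLeaves.1.2
    case odd.odd => exact absurd hd not_dotted_expandLeaves_odd_odd

theorem IsCNAT.allLeavesShort_expandLeaves (h : IsCNAT E) : AllLeavesShort (expandLeaves E) := by
  refine h.isCNAT_expandLeaves.allLeavesShort_iff.2 fun i j hl => ?_
  cases i using even_odd_cases <;> cases j using even_odd_cases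
  case even.even =>
    exact absurd (h.isInternal_expandLeaves (dotted_expandLeaves_even_even.1 hl.1)).2.1 hl.2.1
  case even.odd => exact .inr (dotted_expandLeaves_even_odd.1 hl.1).isShortRightLeaf_expandLeaves
  case odd.even => exact .inl (dotted_expandLeaves_odd_even.1 hl.1).isShortLeftLeaf_expandLeaves
  case odd.odd => exact absurd hl.1 not_dotted_expandLeaves_odd_odd

theorem exists_dotted_row_of_expandLeaves (h : IsCNAT (expandLeaves E)) (a : Fin p) :
    ∃ b, Dotted E a b := by
  obtain ⟨j, hd⟩ := h.exists_dotted_row (evenIdx a)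
  cases j using even_odd_cases with
  | even b => exact ⟨b, dotted_expandLeaves_even_even.1 hd⟩
  | odd b => exact ⟨b, (dotted_expandLeaves_even_odd.1 hd).1⟩

theorem isCNAT_of_expandLeaves (h : IsCNAT (expandLeaves E)) : IsCNAT E := by
  refine ⟨fun a b ha hb => ?_, fun a b hd hne => ?_, exists_dotted_row_of_expandLeaves h,
    exists_dotted_row_of_expandLeaves (E := flip E) (flip_expandLeaves ▸ h.flip), fun a b hd => ?_⟩
  · exact dotted_expandLeaves_even_even.1 <| h.dotted_root (by simpa using ha) (by simpa using hb)
  · rw [← hasDotAbove_expandLeaves hd, ← hasDotLeft_expandLeaves hd]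
    exact h.xor_above_left (dotted_expandLeaves_even_even.2 hd) (by simpa using hne)
  · have hcomplete := h.below_and_right_or_neither (dotted_expandLeaves_even_even.2 hd)
    rw [hasDotBelow_expandLeaves, hasDotRight_expandLeaves] at hcomplete
    by_cases hl : IsLeaf E a b
    · exact .inr hl.2
    · simpa only [hl, or_false] using hcomplete

end Expansion

section Contraction

variable {p : ℕ} {D : Grid (2 * p)} {a b : Fin p}

/-- The restriction of a grid to the cells of even coordinates; it prunes the leaves of a CNAT all
of whose leaves are short. -/
def evenSubgrid (D : Grid (2 * p)) : Grid p := fun a b => D (evenIdx a) (evenIdx b)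

theorem evenSubgrid_expandLeaves (E : Grid p) : evenSubgrid (expandLeaves E) = E :=
  grid_ext fun _ _ => dotted_expandLeaves_even_even

theorem AllLeavesShort.dotted_evenSubgrid_of_isLeaf (hs : AllLeavesShort D) (h : IsCNAT D)
    (hl : IsLeaf D (evenIdx a) (oddIdx b)) : Dotted (evenSubgrid D) a b := by
  obtain ⟨-, j, hj, hd⟩ := (hs.isShortRightLeaf_iff_even h hl).2 (by simp)
  obtain rfl : j = evenIdx b := Fin.ext (by simpa using hj)
  exact hd

theorem AllLeavesShort.isLeaf_odd_even (hs : AllLeavesShort D) (h : IsCNAT D)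
    (hl : IsLeaf D (evenIdx a) (oddIdx b)) : IsLeaf D (oddIdx a) (evenIdx b) := by
  obtain ⟨k, hk, hleaf⟩ :=
    hs.exists_isLeaf_below_left h hl rfl (hs.dotted_evenSubgrid_of_isLeaf h hl)
  obtain rfl : oddIdx a = k := Fin.ext hk
  exact hleaf

theorem AllLeavesShort.isLeaf_even_odd_iff (hs : AllLeavesShort D) (h : IsCNAT D) :
    IsLeaf D (evenIdx a) (oddIdx b) ↔ IsLeaf D (oddIdx a) (evenIdx b) :=
  ⟨hs.isLeaf_odd_even h,
    fun hl => isLeaf_flip.1 <| (hs.flip h).isLeaf_odd_even h.flip (isLeaf_flip.2 hl)⟩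

theorem AllLeavesShort.exists_isLeaf_even_odd (hs : AllLeavesShort D) (h : IsCNAT D) (a : Fin p) :
    ∃ b, IsLeaf D (evenIdx a) (oddIdx b) := by
  obtain ⟨j, hl⟩ := h.exists_isLeaf_row (evenIdx a)
  cases j using even_odd_cases with
  | even b => exact absurd ((hs.even_row_iff_odd_col h hl).1 (by simp)) (by simp)
  | odd b => exact ⟨b, hl⟩

theorem AllLeavesShort.isLeaf_evenSubgrid_iff (hs : AllLeavesShort D) (h : IsCNAT D) :
    IsLeaf (evenSubgrid D) a b ↔ IsLeaf D (evenIdx a) (oddIdx b) := by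
  refine ⟨fun hl => ?_, fun hright => ?_⟩
  · obtain ⟨c, hc⟩ := hs.exists_isLeaf_even_odd h a
    have hcb : c ≤ b := not_lt.1 fun hlt => hl.2.2 ⟨c, hlt, hs.dotted_evenSubgrid_of_isLeaf h hc⟩
    have hbc : b ≤ c := not_lt.1 fun hlt => hc.2.2 ⟨evenIdx b, oddIdx_lt_evenIdx.2 hlt, hl.1⟩
    rwa [hbc.antisymm hcb]
  · have hleft : IsLeaf D (oddIdx a) (evenIdx b) := hs.isLeaf_odd_even h hright
    exact ⟨hs.dotted_evenSubgrid_of_isLeaf h hright,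
      fun ⟨c, hc, hd⟩ => hleft.2.1 ⟨evenIdx c, oddIdx_lt_evenIdx.2 hc, hd⟩,
      fun ⟨c, hc, hd⟩ => hright.2.2 ⟨evenIdx c, oddIdx_lt_evenIdx.2 hc, hd⟩⟩

theorem AllLeavesShort.expandLeaves_evenSubgrid (hs : AllLeavesShort D) (h : IsCNAT D) :
    expandLeaves (evenSubgrid D) = D := by
  refine grid_ext fun i j => ?_
  cases i using even_odd_cases <;> cases j using even_odd_cases
  case even.even => exact dotted_expandLeaves_even_even
  case even.odd =>
    rw [dotted_expandLeaves_even_odd, hs.isLeaf_evenSubgrid_iff h]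
    exact ⟨And.left, fun hd => hs.isLeaf_of_odd_col h hd (by simp)⟩
  case odd.even =>
    rw [dotted_expandLeaves_odd_even, hs.isLeaf_evenSubgrid_iff h, hs.isLeaf_even_odd_iff h]
    exact ⟨And.left, fun hd => hs.isLeaf_of_odd_row h hd (by simp)⟩
  case odd.odd =>
    refine iff_of_false not_dotted_expandLeaves_odd_odd fun hd => ?_
    simpa using hs.even_row_iff_odd_col h (hs.isLeaf_of_odd_col h hd (by simp))

theorem AllLeavesShort.isCNAT_evenSubgrid (hs : AllLeavesShort D) (h : IsCNAT D) :
    IsCNAT (evenSubgrid D) :=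
  isCNAT_of_expandLeaves <| (hs.expandLeaves_evenSubgrid h).symm ▸ h

/-- Pruning all leaves, as a bijection from the CNATs of size `2p` with short leaves only to the
CNATs of size `p`; its inverse turns every leaf into a cherry. -/
noncomputable def pruneLeavesEquiv (p : ℕ) :
    {D : Grid (2 * p) // IsCNAT D ∧ AllLeavesShort D} ≃ {D : Grid p // IsCNAT D} where
  toFun D := ⟨evenSubgrid D.1, D.2.2.isCNAT_evenSubgrid D.2.1⟩
  invFun E := ⟨expandLeaves E.1, E.2.isCNAT_expandLeaves, E.2.allLeavesShort_expandLeaves⟩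
  left_inv D := Subtype.ext (D.2.2.expandLeaves_evenSubgrid D.2.1)
  right_inv E := Subtype.ext (evenSubgrid_expandLeaves E.1)

end Contraction

/-- For every `p ≥ 1`, the set `𝒜₂ₚ` of CNATs of size `2p`
all of whose leaves are short is in bijection with the set of CNATs of size
`p`; in particular `|𝒜₂ₚ| = Tₚ`. -/
theorem cnat_all_short_even_bijection (p : ℕ) (hp : 1 ≤ p) :
    Nonempty ({D : Grid (2 * p) // IsCNAT D ∧ AllLeavesShort D}
        ≃ {D : Grid p // IsCNAT D}) ∧
    Nat.card {D : Grid (2 * p) // IsCNAT D ∧ AllLeavesShort D}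
      = Nat.card {D : Grid p // IsCNAT D} :=
  ⟨⟨pruneLeavesEquiv p⟩, Nat.card_congr (pruneLeavesEquiv p)⟩

end CNATf
end

section
/- For every integer p ≥ 1 and every CNAT T of size 2p all of whose leaves are short, the sign of the associated permutation π(T) equals (−1)^p. -/
/-!
Formalization of complete non-ambiguous trees (CNATs).

A CNAT of size `n` is modelled as a Boolean filling `D : Fin n → Fin n → Bool`
of the `n × n` grid (`D i j = true` meaning that cell in row `i`, column `j`
is dotted; rows are numbered from the top, columns from the left, `0`-based),
satisfying the root, non-ambiguity, minimality and completeness conditions.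
-/

namespace CNATf

/-!
Let `A` be the set of rows containing a left leaf, and `B` the set of columns containing a right
leaf, so that `π` maps the complement of `A` onto `B`. Shortness and non-ambiguity force the row
just above a row of `A` to lie outside `A`, and the column just left of a column of `B` to lie
outside `B`; hence `#A ≤ #Aᶜ = #B ≤ #Bᶜ = #A`. Equality forces both `A` and `B` to consist of the
(`0`-based) odd indices, so that `π` exchanges parities. The parent of the leaf in the odd row `i`
shows moreover that `π i ≤ π (i - 1)`. Composing `π` with the `n / 2` transpositions of `2a` and
`2a + 1` gives a permutation which preserves parity; the two permutations of the pairs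
`{2a, 2a + 1}` that it induces, one for each parity, are pointwise comparable, hence equal, so
their signs cancel and only the transpositions contribute.
-/

open Equiv Finset

section PrecededByComplement

variable {α : Type*} [LinearOrder α] [Fintype α] {A : Finset α}

theorem card_le_card_compl_of_forall_exists_covBy (hA : ∀ i ∈ A, ∃ k ∉ A, k ⋖ i) :
    #A ≤ #Aᶜ :=
  card_le_card_of_forall_subsingleton (fun i k ↦ k ⋖ i) (by simpa only [mem_compl] using hA)
    fun _ _ _ hi _ hj ↦ hi.2.unique_right hj.2

theorem exists_mem_covBy_of_card_compl_le (hA : ∀ i ∈ A, ∃ k ∉ A, k ⋖ i) (hcard : #Aᶜ ≤ #A)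
    {k : α} (hk : k ∉ A) : ∃ i ∈ A, k ⋖ i := by
  by_contra! hnone
  have hle : #A ≤ #(Aᶜ.erase k) := by
    refine card_le_card_of_forall_subsingleton (fun i k ↦ k ⋖ i) (fun i hi ↦ ?_)
      fun _ _ _ hi _ hj ↦ hi.2.unique_right hj.2
    obtain ⟨l, hl, hli⟩ := hA i hi
    have hlk : l ≠ k := by
      rintro rfl
      exact hnone i hi hli
    exact ⟨l, by simp [hl, hlk], hli⟩
  exact (hcard.trans hle).not_gt (card_erase_lt_of_mem (mem_compl.2 hk))

end PrecededByComplement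

section Parity

variable {n : ℕ} {A : Finset (Fin n)}

theorem mem_iff_odd_of_card_compl_le (hA : ∀ i ∈ A, ∃ k ∉ A, k ⋖ i) (hcard : #Aᶜ ≤ #A)
    (i : Fin n) : i ∈ A ↔ Odd (i : ℕ) := by
  obtain ⟨m, hm⟩ := i
  induction m with
  | zero =>
    refine iff_of_false (fun h ↦ ?_) (by simp)
    obtain ⟨k, -, hk⟩ := hA _ h
    exact absurd hk.lt (Nat.not_lt_zero k)
  | succ m ih =>
    have hstep : (⟨m, by lia⟩ : Fin n) ⋖ ⟨m + 1, hm⟩ := by simp [Fin.covBy_iff]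
    have hmem : (⟨m + 1, hm⟩ : Fin n) ∈ A ↔ (⟨m, by lia⟩ : Fin n) ∉ A := by
      constructor
      · intro h
        obtain ⟨k, hkA, hk⟩ := hA _ h
        rwa [hk.unique_left hstep] at hkA
      · intro h
        obtain ⟨i, hiA, hi⟩ := exists_mem_covBy_of_card_compl_le hA hcard h
        rwa [hi.unique_right hstep] at hiA
    rw [hmem, ih, Nat.odd_add_one]

theorem even_of_card_compl_le (hA : ∀ i ∈ A, ∃ k ∉ A, k ⋖ i) (hcard : #Aᶜ ≤ #A) : Even n := by
  obtain _ | m := n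
  · exact Even.zero
  have hlast : Fin.last m ∈ A := by
    by_contra h
    obtain ⟨i, -, hi⟩ := exists_mem_covBy_of_card_compl_le hA hcard h
    exact (Fin.le_last i).not_gt hi.lt
  exact ((mem_iff_odd_of_card_compl_le hA hcard _).1 hlast).add_one

end Parity

section Sign

theorem perm_eq_one_of_forall_le_apply {α : Type*} [PartialOrder α] [Finite α] {σ : Perm α}
    (h : ∀ a, a ≤ σ a) : σ = 1 := by
  obtain ⟨m, hm⟩ := Nat.exists_eq_add_one.2 (orderOf_pos σ)
  ext a
  have hge : σ a ≤ a :=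
    calc σ a ≤ σ^[m] (σ a) := Function.id_le_iterate_of_id_le h m (σ a)
      _ = (σ ^ (m + 1)) a := by rw [Perm.iterate_eq_pow, pow_succ, Perm.mul_apply]
      _ = a := by rw [← hm, pow_orderOf_eq_one, Perm.one_apply]
  exact hge.antisymm (h a)

theorem perm_eq_of_forall_le {α : Type*} [PartialOrder α] [Finite α] {σ τ : Perm α}
    (h : ∀ a, σ a ≤ τ a) : σ = τ := by
  have hone : τ * σ⁻¹ = 1 :=
    perm_eq_one_of_forall_le_apply fun a ↦ by simpa using h (σ⁻¹ a)
  exact (mul_inv_eq_one.1 hone).symm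

theorem exists_eq_prodCongrLeft {α β : Type*} {f : Perm (α × β)} (hf : ∀ x, (f x).2 = x.2) :
    ∃ σ : β → Perm α, f = prodCongrLeft σ := by
  have hf' (x : α × β) : (f.symm x).2 = x.2 := by rw [← hf, apply_symm_apply]
  have happly (a : α) (b : β) : ((f (a, b)).1, b) = f (a, b) := Prod.ext rfl (hf (a, b)).symm
  have hsymm (a : α) (b : β) : ((f.symm (a, b)).1, b) = f.symm (a, b) :=
    Prod.ext rfl (hf' (a, b)).symm
  refine ⟨fun b ↦ ⟨fun a ↦ (f (a, b)).1, fun a ↦ (f.symm (a, b)).1, fun a ↦ ?_, fun a ↦ ?_⟩, ?_⟩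
  · simp only [happly, symm_apply_apply]
  · simp only [hsymm, apply_symm_apply]
  · ext ⟨a, b⟩ : 1
    exact (happly a b).symm

theorem sign_eq_of_flips_snd {α : Type*} [PartialOrder α] [Fintype α] [DecidableEq α]
    {f : Perm (α × Fin 2)} (hflip : ∀ x, (f x).2 ≠ x.2)
    (hle : ∀ a, (f (a, 1)).1 ≤ (f (a, 0)).1) :
    Perm.sign f = (-1) ^ Fintype.card α := by
  let flip : Perm (α × Fin 2) := prodCongrRight fun _ ↦ swap 0 1
  have hsign_flip : Perm.sign flip = (-1) ^ Fintype.card α := by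
    simp [flip, Perm.sign_prodCongrRight]
  have hfix (x : α × Fin 2) : ((f * flip) x).2 = x.2 := by
    have hfin : ∀ b c : Fin 2, c ≠ swap 0 1 b → c = b := by decide
    exact hfin _ _ (hflip (flip x))
  obtain ⟨σ, hσ⟩ := exists_eq_prodCongrLeft hfix
  have hσ_apply (a : α) (b : Fin 2) : σ b a = (f (a, swap 0 1 b)).1 :=
    (congrArg Prod.fst (DFunLike.congr_fun hσ (a, b))).symm
  have hσ_eq : σ 0 = σ 1 := perm_eq_of_forall_le fun a ↦ by simpa [hσ_apply] using hle a
  have hsign : Perm.sign f * Perm.sign flip = 1 := by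
    rw [← Perm.sign_mul, hσ, Perm.sign_prodCongrLeft, Fin.prod_univ_two, hσ_eq, Int.units_mul_self]
  rw [mul_eq_one_iff_eq_inv.1 hsign, Int.units_inv_eq_self, hsign_flip]

theorem sign_eq_of_flips_parity {p : ℕ} {π : Perm (Fin (p * 2))}
    (hodd : ∀ i, Odd (π i : ℕ) ↔ ¬Odd (i : ℕ))
    (hle : ∀ k i : Fin (p * 2), Odd (i : ℕ) → k ⋖ i → π i ≤ π k) :
    Perm.sign π = (-1) ^ p := by
  let e : Fin p × Fin 2 ≃ Fin (p * 2) := finProdFinEquiv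
  have he (a : Fin p) (b : Fin 2) : (e (a, b) : ℕ) = b + 2 * a := rfl
  rw [← Perm.sign_permCongr e.symm π, sign_eq_of_flips_snd, Fintype.card_fin]
  · rintro ⟨a, b⟩ h
    have hmod : (π (e (a, b)) : ℕ) % 2 = b := congrArg Fin.val h
    have hparity := hodd (e (a, b))
    rw [Nat.odd_iff, Nat.odd_iff, hmod, he] at hparity
    lia
  · intro a
    have hcov : e (a, 0) ⋖ e (a, 1) := by
      rw [Fin.covBy_iff, Nat.covBy_iff_add_one_eq, he, he]
      simp [add_comm]
    have hle' : π (e (a, 1)) ≤ π (e (a, 0)) := hle _ _ (by simp [he]) hcov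
    exact Nat.div_le_div_right (c := 2) hle'

end Sign

section NonAmbiguous

variable {n : ℕ} {D : Grid n} {π : Perm (Fin n)}

/-- No dot has both a dot above it and a dot to its left: the part of non-ambiguity which also
holds for forests of non-ambiguous trees. -/
def NonAmbiguous (D : Grid n) : Prop :=
  ∀ i j : Fin n, Dotted D i j → ¬(HasDotAbove D i j ∧ HasDotLeft D i j)

theorem IsCNAT.nonAmbiguous (hD : IsCNAT D) : NonAmbiguous D := by
  rintro i j hij ⟨habove, hleft⟩
  have hroot : ¬((i : ℕ) = 0 ∧ (j : ℕ) = 0) := by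
    rintro ⟨hi, -⟩
    obtain ⟨k, hk, -⟩ := habove
    exact Nat.not_lt_zero _ (hi ▸ hk : (k : ℕ) < 0)
  rcases hD.2.1 i j hij hroot with h | h
  exacts [h.2 hleft, h.2 habove]

theorem IsShortLeaf.exists_covBy_dotted {i j : Fin n} (h : IsShortLeaf D (i, j)) :
    (∃ k, k ⋖ i ∧ Dotted D k j) ∨ ∃ k, k ⋖ j ∧ Dotted D i k := by
  obtain ⟨-, ⟨r, c⟩, hparent, hadj⟩ := h
  have hdot : Dotted D r c := by
    rcases hparent with hp | hp
    exacts [hp.2.2.1, hp.2.2.1]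
  rcases hadj with ⟨hr, rfl⟩ | ⟨hc, rfl⟩
  · exact .inl ⟨r, by rwa [Fin.covBy_iff, Nat.covBy_iff_add_one_eq], hdot⟩
  · exact .inr ⟨c, by rwa [Fin.covBy_iff, Nat.covBy_iff_add_one_eq], hdot⟩

theorem IsAssocPerm.col_le (hπ : IsAssocPerm D π) {i j : Fin n} (h : Dotted D i j) : j ≤ π i :=
  not_lt.1 fun hlt ↦ (hπ i).2.2 ⟨j, hlt, h⟩

theorem IsAssocPerm.row_le (hπ : IsAssocPerm D π) {i k : Fin n} (h : Dotted D i (π k)) : i ≤ k :=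
  not_lt.1 fun hlt ↦ (hπ k).2.1 ⟨i, hlt, h⟩

open Classical in
/-- The rows of the left leaves, for `π` the permutation associated with `D`. -/
noncomputable def leftLeafRows (D : Grid n) (π : Perm (Fin n)) : Finset (Fin n) :=
  {i | HasDotAbove D i (π i)}

theorem mem_leftLeafRows {i : Fin n} : i ∈ leftLeafRows D π ↔ HasDotAbove D i (π i) := by
  simp [leftLeafRows]

/-- The columns of the remaining leaves, for `π` the permutation associated with `D`; when all
leaves are short these are exactly the right leaves. -/
noncomputable def rightLeafColumns (D : Grid n) (π : Perm (Fin n)) : Finset (Fin n) :=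
  (leftLeafRows D π)ᶜ.map π.toEmbedding

theorem apply_mem_rightLeafColumns {i : Fin n} :
    π i ∈ rightLeafColumns D π ↔ i ∉ leftLeafRows D π := by
  simp [rightLeafColumns]

theorem card_rightLeafColumns : #(rightLeafColumns D π) = #(leftLeafRows D π)ᶜ :=
  card_map _

theorem card_compl_rightLeafColumns : #(rightLeafColumns D π)ᶜ = #(leftLeafRows D π) := by
  rw [card_compl, card_rightLeafColumns, ← card_compl, compl_compl]

theorem exists_covBy_notMem_rightLeafColumns (hshort : AllLeavesShort D)
    (hπ : IsAssocPerm D π) : ∀ j ∈ rightLeafColumns D π, ∃ k ∉ rightLeafColumns D π, k ⋖ j := by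
  intro j hj
  obtain ⟨i, rfl⟩ := π.surjective j
  rw [apply_mem_rightLeafColumns, mem_leftLeafRows] at hj
  rcases (hshort _ (hπ i)).exists_covBy_dotted with ⟨k, hki, hdot⟩ | ⟨c, hc, hdot⟩
  · exact absurd ⟨k, hki.lt, hdot⟩ hj
  · obtain ⟨k, rfl⟩ := π.surjective c
    have hik : i < k := (hπ.row_le hdot).lt_of_ne (ne_of_apply_ne π hc.ne')
    refine ⟨π k, ?_, hc⟩
    rw [apply_mem_rightLeafColumns, not_not, mem_leftLeafRows]
    exact ⟨i, hik, hdot⟩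

variable (hD : NonAmbiguous D) (hshort : AllLeavesShort D) (hπ : IsAssocPerm D π)
include hD hπ

theorem NonAmbiguous.notMem_leftLeafRows_of_dotted_of_lt {i j : Fin n} (h : Dotted D i j)
    (hj : j < π i) : i ∉ leftLeafRows D π :=
  fun hi ↦ hD _ _ (hπ i).1 ⟨mem_leftLeafRows.1 hi, j, hj, h⟩

include hshort

theorem NonAmbiguous.exists_covBy_dotted_of_mem_leftLeafRows {i : Fin n}
    (hi : i ∈ leftLeafRows D π) : ∃ k, k ⋖ i ∧ Dotted D k (π i) := by
  rcases (hshort _ (hπ i)).exists_covBy_dotted with h | ⟨k, hk, hdot⟩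
  · exact h
  · exact absurd hi (hD.notMem_leftLeafRows_of_dotted_of_lt hπ hdot hk.lt)

theorem NonAmbiguous.exists_covBy_notMem_leftLeafRows :
    ∀ i ∈ leftLeafRows D π, ∃ k ∉ leftLeafRows D π, k ⋖ i := by
  intro i hi
  obtain ⟨k, hki, hdot⟩ := hD.exists_covBy_dotted_of_mem_leftLeafRows hshort hπ hi
  have hlt : π i < π k := (hπ.col_le hdot).lt_of_ne (π.injective.ne hki.lt.ne')
  exact ⟨k, hD.notMem_leftLeafRows_of_dotted_of_lt hπ hdot hlt, hki⟩

theorem NonAmbiguous.card_leftLeafRows : #(leftLeafRows D π) = #(leftLeafRows D π)ᶜ := by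
  have hrows := card_le_card_compl_of_forall_exists_covBy
    (hD.exists_covBy_notMem_leftLeafRows hshort hπ)
  have hcols := card_le_card_compl_of_forall_exists_covBy
    (exists_covBy_notMem_rightLeafColumns hshort hπ)
  rw [card_rightLeafColumns, card_compl_rightLeafColumns] at hcols
  exact hrows.antisymm hcols

theorem NonAmbiguous.even_of_allLeavesShort : Even n :=
  even_of_card_compl_le (hD.exists_covBy_notMem_leftLeafRows hshort hπ)
    (hD.card_leftLeafRows hshort hπ).ge

theorem NonAmbiguous.mem_leftLeafRows_iff_odd (i : Fin n) : i ∈ leftLeafRows D π ↔ Odd (i : ℕ) :=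
  mem_iff_odd_of_card_compl_le (hD.exists_covBy_notMem_leftLeafRows hshort hπ)
    (hD.card_leftLeafRows hshort hπ).ge i

theorem NonAmbiguous.mem_rightLeafColumns_iff_odd (j : Fin n) :
    j ∈ rightLeafColumns D π ↔ Odd (j : ℕ) := by
  refine mem_iff_odd_of_card_compl_le (exists_covBy_notMem_rightLeafColumns hshort hπ) ?_ j
  rw [card_rightLeafColumns, card_compl_rightLeafColumns]
  exact (hD.card_leftLeafRows hshort hπ).le

theorem NonAmbiguous.odd_apply_iff_not_odd (i : Fin n) : Odd (π i : ℕ) ↔ ¬Odd (i : ℕ) := by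
  rw [← hD.mem_rightLeafColumns_iff_odd hshort hπ, apply_mem_rightLeafColumns,
    hD.mem_leftLeafRows_iff_odd hshort hπ]

theorem NonAmbiguous.apply_le_of_covBy_of_odd (k i : Fin n) (hi : Odd (i : ℕ)) (hki : k ⋖ i) :
    π i ≤ π k := by
  obtain ⟨l, hli, hdot⟩ := hD.exists_covBy_dotted_of_mem_leftLeafRows hshort hπ
    ((hD.mem_leftLeafRows_iff_odd hshort hπ i).2 hi)
  rw [hki.unique_left hli]
  exact hπ.col_le hdot

end NonAmbiguous

theorem cnat_all_short_sign_general {n : ℕ} {D : Grid n} (hD : NonAmbiguous D)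
    (hshort : AllLeavesShort D) {π : Perm (Fin n)} (hπ : IsAssocPerm D π) :
    Even n ∧ Perm.sign π = (-1) ^ (n / 2) := by
  have hn : Even n := hD.even_of_allLeavesShort hshort hπ
  refine ⟨hn, ?_⟩
  obtain ⟨p, rfl⟩ := dvd_iff_exists_eq_mul_left.1 hn.two_dvd
  rw [Nat.mul_div_cancel p two_pos]
  exact sign_eq_of_flips_parity (hD.odd_apply_iff_not_odd hshort hπ)
    (hD.apply_le_of_covBy_of_odd hshort hπ)

/-- For every `p ≥ 1` and every CNAT `T` of size `2p` all of
whose leaves are short, the sign of the associated permutation `π(T)` equals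
`(-1)^p`. -/
theorem cnat_all_short_sign (p : ℕ) (hp : 1 ≤ p) (D : Grid (2 * p))
    (hD : IsCNAT D) (hshort : AllLeavesShort D)
    (π : Equiv.Perm (Fin (2 * p))) (hπ : IsAssocPerm D π) :
    Equiv.Perm.sign π = (-1) ^ p := by
  simpa using (cnat_all_short_sign_general hD.nonAmbiguous hshort hπ).2

end CNATf
end
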